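/- arXiv:1210.5546 — 5 statements merged into one kernel-verified Lean document; each statement's English description precedes it below -/
import Mathlib

section
/- Let p ∈ (0,1], c_p = 1/Γ(1+1/p), let ν_p^2 have density (c_p/2)²·exp(−|x|^p−|y|^p) on ℝ², and let μ_+ have density c_p·e^{−x^p} on [0,∞). Let f : [0,∞) → [0,∞] be nonincreasing and let K = {(x,y) ∈ ℝ² : |y| ≤ f(|x|)} be the associated ideal. With T(u) = c_p·∫_u^∞ e^{−x^p} dx and S(u) = c_p·∫_0^u x^p e^{−x^p} dx, the quantity M_p(K) = ∫_K (|x|^p+|y|^p) dν_p^2 satisfies M_p(K) = 1/p − ∫_0^∞ x^p·T(f(x)) dμ_+(x) + ∫_0^∞ S(f(x)) dμ_+(x). -/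
/-!
By the symmetries `x ↦ -x` and `y ↦ -y`, the integral defining `M_p(K)` is four times the integral
over the part of `K` in the open first quadrant. There the section of `K` above `x` is
`cutoff (f x) = {y > 0 | y ≤ f x}`, so Fubini gives, with `e t = exp (-t ^ p)`,

`M_p(K) = c_p ^ 2 ∫_{x > 0} (x ^ p e(x) ∫_{cutoff (f x)} e + e(x) ∫_{cutoff (f x)} y ^ p e(y) dy) dx`.

Since `c_p ∫_0^∞ e = 1` and `c_p ∫_0^∞ y ^ p e(y) dy = 1 / p`, for every extended value `u` we have
`c_p ∫_{cutoff u} e = 1 - T u` and `c_p ∫_{cutoff u} y ^ p e(y) dy = S u`. The first summand then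
splits into `∫ x ^ p dμ₊ = 1 / p` minus `∫ x ^ p T(f x) dμ₊`. The splitting is legitimate because
`cutoff` integrals of nonnegative integrable functions are bounded and monotone in `u`, hence
measurable after composition with the antitone `f`. As the values of `f` on negative reals are
arbitrary, `K` is shown to be measurable via the antitone function `x ↦ f (max x 0)`.
-/

open MeasureTheory Real Set

noncomputable section

/-- The positive reals not exceeding the extended bound `u`: this is `(0, u]` for finite `u`, and
`(0, ∞)` for `u = ⊤`. -/
def cutoff (u : ENNReal) : Set ℝ := {y | 0 < y ∧ ENNReal.ofReal y ≤ u}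

lemma cutoff_subset (u : ENNReal) : cutoff u ⊆ Ioi 0 := fun _ h => h.1

lemma cutoff_mono : Monotone cutoff := fun _ _ h _ hy => ⟨hy.1, hy.2.trans h⟩

lemma cutoff_top : cutoff ⊤ = Ioi 0 := by ext; simp [cutoff]

lemma cutoff_ofReal {r : ℝ} (hr : 0 ≤ r) : cutoff (ENNReal.ofReal r) = Ioc 0 r := by
  ext y
  simp [cutoff, ENNReal.ofReal_le_ofReal_iff hr]

lemma measurableSet_cutoff (u : ENNReal) : MeasurableSet (cutoff u) :=
  measurableSet_Ioi.inter (measurableSet_le ENNReal.measurable_ofReal measurable_const)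

/-- The integral over `cutoff u` as an integral over the whole half-line, in the form produced by
taking a section of the indicator of `K`. -/
lemma setIntegral_cutoff_eq (φ : ℝ → ℝ) (u : ENNReal) :
    ∫ y in Ioi 0, (if ENNReal.ofReal y ≤ u then φ y else 0) = ∫ y in cutoff u, φ y := by
  have h : (cutoff u) = Ioi 0 ∩ {y | ENNReal.ofReal y ≤ u} := rfl
  rw [h, ← setIntegral_indicator (measurableSet_le ENNReal.measurable_ofReal measurable_const)]
  simp only [indicator_apply, mem_ofPred_eq]

lemma setIntegral_cutoff_mono {φ : ℝ → ℝ} (h0 : ∀ y ∈ Ioi (0 : ℝ), 0 ≤ φ y)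
    (hφ : IntegrableOn φ (Ioi 0)) :
    Monotone fun u => ∫ y in cutoff u, φ y := fun _ v huv =>
  setIntegral_mono_set (hφ.mono_set (cutoff_subset v))
    (ae_restrict_of_forall_mem (measurableSet_cutoff v) fun _ hy => h0 _ hy.1)
    (cutoff_mono huv).eventuallyLE

lemma abs_setIntegral_cutoff_le {φ : ℝ → ℝ} (h0 : ∀ y ∈ Ioi (0 : ℝ), 0 ≤ φ y)
    (hφ : IntegrableOn φ (Ioi 0)) (u : ENNReal) :
    |∫ y in cutoff u, φ y| ≤ ∫ y in Ioi 0, φ y := by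
  rw [abs_of_nonneg (setIntegral_nonneg (measurableSet_cutoff u) fun _ hy => h0 _ hy.1),
    ← cutoff_top]
  exact setIntegral_cutoff_mono h0 hφ le_top

/-- Integrating a cutoff integral with an antitone bound against an integrable weight is
legitimate: the cutoff integral is bounded, and it is antitone in `x`, hence measurable. -/
lemma integrableOn_mul_setIntegral_cutoff {φ : ℝ → ℝ} (h0 : ∀ y ∈ Ioi (0 : ℝ), 0 ≤ φ y)
    (hφ : IntegrableOn φ (Ioi 0))
    {f : ℝ → ENNReal} (hf : AntitoneOn f (Ici 0))
    {ψ : ℝ → ℝ} (hψ : IntegrableOn ψ (Ioi 0)) :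
    IntegrableOn (fun x => ψ x * ∫ y in cutoff (f x), φ y) (Ioi 0) := by
  refine Integrable.mul_bdd (c := ∫ y in Ioi 0, φ y) hψ ?_
    (ae_of_all _ fun x => abs_setIntegral_cutoff_le h0 hφ (f x))
  have h : AntitoneOn (fun x => ∫ y in cutoff (f x), φ y) (Ioi 0) := fun x hx y hy hxy =>
    setIntegral_cutoff_mono h0 hφ (hf (Ioi_subset_Ici_self hx) (Ioi_subset_Ici_self hy) hxy)
  exact (aemeasurable_restrict_of_antitoneOn measurableSet_Ioi h).aestronglyMeasurable

lemma integrable_comp_abs_of_Ioi {φ : ℝ → ℝ} (hφ : IntegrableOn φ (Ioi 0)) :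
    Integrable fun x => φ |x| := by
  have h1 : IntegrableOn (fun x => φ |x|) (Ioi 0) :=
    hφ.congr_fun (fun x hx => by simp [abs_of_pos (mem_Ioi.1 hx)]) measurableSet_Ioi
  have h2 : IntegrableOn (fun x => φ |x|) (Iic 0) := by
    have h3 : IntegrableOn (fun x => φ |x|) (Ici (-0)) := by
      rw [neg_zero]
      exact (integrableOn_Ici_iff_integrableOn_Ioi).2 h1
    simpa using h3.comp_neg_Iic
  rw [← integrableOn_univ, ← Iic_union_Ioi (a := (0 : ℝ))]
  exact h2.union h1

/-- The folding of the plane onto the first quadrant. -/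
lemma integral_comp_abs_abs {H : ℝ → ℝ → ℝ} (hH : Integrable fun z : ℝ × ℝ => H |z.1| |z.2|) :
    ∫ z : ℝ × ℝ, H |z.1| |z.2| = 4 * ∫ x in Ioi 0, ∫ y in Ioi 0, H x y := by
  rw [Measure.volume_eq_prod] at hH ⊢
  rw [integral_prod _ hH]
  simp only [fun x : ℝ => integral_comp_abs (f := H |x|)]
  rw [integral_comp_abs (f := fun x => 2 * ∫ y in Ioi 0, H x y), integral_const_mul]
  ring

/-- The set `K` is measurable whatever `f` is on negative reals, since `f` is only evaluated at
absolute values. -/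
lemma measurableSet_ideal {f : ℝ → ENNReal} (hf : AntitoneOn f (Ici 0)) :
    MeasurableSet {z : ℝ × ℝ | ENNReal.ofReal |z.2| ≤ f |z.1|} := by
  have hg : Antitone fun x => f (max x 0) := fun x y hxy =>
    hf (mem_Ici.2 (le_max_right x 0)) (mem_Ici.2 (le_max_right y 0)) (max_le_max_right 0 hxy)
  have h : Measurable fun z : ℝ × ℝ => f (max |z.1| 0) :=
    hg.measurable.comp (measurable_fst.abs)
  have habs : ∀ x : ℝ, max |x| 0 = |x| := fun x => max_eq_left (abs_nonneg x)
  simp only [habs] at h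
  exact measurableSet_le (ENNReal.measurable_ofReal.comp measurable_snd.abs) h

/-- **Formula for `M_p(K)` for an ideal.** Let `p ∈ (0,1]`, `c_p = 1/Γ(1+1/p)`, let `ν_p²` have
density `(c_p/2)²·exp(-|x|^p - |y|^p)` on `ℝ²` and let `μ₊` have density `c_p·exp(-x^p)` on
`[0,∞)`. If `f : [0,∞) → [0,∞]` is nonincreasing and `K = {(x,y) : |y| ≤ f(|x|)}` is the
associated ideal, then with `T u = c_p·∫_u^∞ exp(-x^p) dx` (and `T ∞ = 0`),
`S u = c_p·∫_0^u x^p·exp(-x^p) dx` (and `S ∞ = 1/p`), one has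
`M_p(K) = 1/p - ∫ x^p·T(f x) dμ₊ + ∫ S(f x) dμ₊`. -/
theorem Mp_ideal_formula (p : ℝ) (hp : p ∈ Set.Ioc (0 : ℝ) 1)
    (cp : ℝ) (hcp : cp = 1 / Real.Gamma (1 + 1 / p))
    (ν : Measure (ℝ × ℝ))
    (hν : ν = (volume : Measure (ℝ × ℝ)).withDensity fun z =>
      ENNReal.ofReal ((cp / 2) ^ 2 * Real.exp (-(|z.1| ^ p + |z.2| ^ p))))
    (μplus : Measure ℝ)
    (hμ : μplus = ((volume : Measure ℝ).restrict (Set.Ici 0)).withDensity fun x =>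
      ENNReal.ofReal (cp * Real.exp (-(x ^ p))))
    (f : ℝ → ENNReal) (hf : AntitoneOn f (Set.Ici 0))
    (K : Set (ℝ × ℝ)) (hK : K = {z : ℝ × ℝ | ENNReal.ofReal |z.2| ≤ f |z.1|})
    (T S : ENNReal → ℝ)
    (hT : ∀ u : ℝ, 0 ≤ u →
      T (ENNReal.ofReal u) = cp * ∫ x in Set.Ioi u, Real.exp (-(x ^ p)))
    (hTtop : T ⊤ = 0)
    (hS : ∀ u : ℝ, 0 ≤ u →
      S (ENNReal.ofReal u) = cp * ∫ x in (0 : ℝ)..u, x ^ p * Real.exp (-(x ^ p)))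
    (hStop : S ⊤ = 1 / p) :
    ∫ z in K, (|z.1| ^ p + |z.2| ^ p) ∂ν =
      1 / p - ∫ x, x ^ p * T (f x) ∂μplus + ∫ x, S (f x) ∂μplus := by
  have hp0 : 0 < p := hp.1
  set e : ℝ → ℝ := fun x => Real.exp (-(x ^ p)) with he
  set m : ℝ → ℝ := fun x => x ^ p * Real.exp (-(x ^ p)) with hm
  have hΓ : 0 < Real.Gamma (1 + 1 / p) := Real.Gamma_pos_of_pos (by positivity)
  have hcp0 : 0 < cp := by rw [hcp]; positivity
  have e_int : IntegrableOn e (Ioi 0) := by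
    simpa using integrableOn_rpow_mul_exp_neg_rpow (s := 0) (by norm_num) hp0
  have m_int : IntegrableOn m (Ioi 0) :=
    integrableOn_rpow_mul_exp_neg_rpow (by linarith) hp0
  have e_nonneg : ∀ y ∈ Ioi (0 : ℝ), 0 ≤ e y := fun y _ => (Real.exp_pos _).le
  have m_nonneg : ∀ y ∈ Ioi (0 : ℝ), 0 ≤ m y := fun y hy =>
    mul_nonneg (Real.rpow_nonneg (mem_Ioi.1 hy).le _) (Real.exp_pos _).le
  have e_total : cp * ∫ x in Ioi 0, e x = 1 := by
    rw [he, integral_exp_neg_rpow hp0, hcp, add_comm (1 / p)]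
    exact one_div_mul_cancel hΓ.ne'
  have m_total : cp * ∫ x in Ioi 0, m x = 1 / p := by
    rw [hm, integral_rpow_mul_exp_neg_rpow hp0 (by linarith), hcp, add_div, div_self hp0.ne']
    field_simp
  have T_eq : ∀ u, T u = 1 - cp * ∫ y in cutoff u, e y := by
    intro u
    induction u with
    | top => rw [hTtop, cutoff_top, e_total, sub_self]
    | coe r =>
      have hr : (r : ENNReal) = ENNReal.ofReal r := (ENNReal.ofReal_coe_nnreal).symm
      rw [hr, hT _ r.coe_nonneg, cutoff_ofReal r.coe_nonneg, ← e_total, ← Ioc_union_Ioi_eq_Ioi r.coe_nonneg,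
        setIntegral_union Ioc_disjoint_Ioi_same measurableSet_Ioi
          (e_int.mono_set Ioc_subset_Ioi_self) (e_int.mono_set (Ioi_subset_Ioi r.coe_nonneg))]
      ring
  have S_eq : ∀ u, S u = cp * ∫ y in cutoff u, m y := by
    intro u
    induction u with
    | top => rw [hStop, cutoff_top, m_total]
    | coe r =>
      have hr : (r : ENNReal) = ENNReal.ofReal r := (ENNReal.ofReal_coe_nnreal).symm
      rw [hr, hS _ r.coe_nonneg, cutoff_ofReal r.coe_nonneg, intervalIntegral.integral_of_le r.coe_nonneg]
  have μ_eq : ∀ φ : ℝ → ℝ, ∫ x, φ x ∂μplus = ∫ x in Ioi 0, cp * e x * φ x := by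
    intro φ
    rw [hμ, integral_withDensity_eq_integral_toReal_smul (by fun_prop)
      (ae_of_all _ fun _ => ENNReal.ofReal_lt_top), integral_Ici_eq_integral_Ioi]
    refine integral_congr_ae (ae_of_all _ fun x => ?_)
    simp only [he, smul_eq_mul]
    rw [ENNReal.toReal_ofReal (by positivity)]
  set E : ENNReal → ℝ := fun u => ∫ y in cutoff u, e y with hE
  set M : ENNReal → ℝ := fun u => ∫ y in cutoff u, m y with hM
  have mE_int : IntegrableOn (fun x => m x * E (f x)) (Ioi 0) :=
    integrableOn_mul_setIntegral_cutoff e_nonneg e_int hf m_int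
  have eM_int : IntegrableOn (fun x => e x * M (f x)) (Ioi 0) :=
    integrableOn_mul_setIntegral_cutoff m_nonneg m_int hf e_int
  have hTint : ∫ x, x ^ p * T (f x) ∂μplus
      = 1 / p - cp ^ 2 * ∫ x in Ioi 0, m x * E (f x) := by
    rw [μ_eq, ← m_total, ← integral_const_mul, ← integral_const_mul,
      ← integral_sub (m_int.const_mul _) (mE_int.const_mul _)]
    refine integral_congr_ae (ae_of_all _ fun x => ?_)
    simp only [T_eq, he, hm, hE]
    ring
  have hSint : ∫ x, S (f x) ∂μplus = cp ^ 2 * ∫ x in Ioi 0, e x * M (f x) := by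
    rw [μ_eq, ← integral_const_mul]
    refine integral_congr_ae (ae_of_all _ fun x => ?_)
    simp only [S_eq, hM]
    ring
  -- On the first quadrant, `H` is the integrand of `M_p(K)` with respect to Lebesgue measure.
  set H : ℝ → ℝ → ℝ := fun x y =>
    if ENNReal.ofReal y ≤ f x then (cp / 2) ^ 2 * (m x * e y + e x * m y) else 0 with hH
  have hKm : MeasurableSet K := hK ▸ measurableSet_ideal hf
  have H_eq : (fun z : ℝ × ℝ => H |z.1| |z.2|) = K.indicator fun z =>
      (cp / 2) ^ 2 * (m |z.1| * e |z.2| + e |z.1| * m |z.2|) := by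
    ext z
    simp only [hK, hH, indicator_apply, mem_ofPred_eq]
  have H_int : Integrable fun z : ℝ × ℝ => H |z.1| |z.2| := by
    rw [H_eq]
    have e' := integrable_comp_abs_of_Ioi e_int
    have m' := integrable_comp_abs_of_Ioi m_int
    exact (((m'.mul_prod e').add (e'.mul_prod m')).const_mul _).indicator hKm
  have inner_eq : ∀ x, ∫ y in Ioi 0, H x y
      = (cp / 2) ^ 2 * (m x * E (f x) + e x * M (f x)) := by
    intro x
    rw [hH]
    simp only [setIntegral_cutoff_eq]
    rw [integral_const_mul, integral_add, integral_const_mul, integral_const_mul]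
    · exact (e_int.mono_set (cutoff_subset _)).const_mul _
    · exact (m_int.mono_set (cutoff_subset _)).const_mul _
  have hLHS : ∫ z in K, (|z.1| ^ p + |z.2| ^ p) ∂ν = ∫ z : ℝ × ℝ, H |z.1| |z.2| := by
    rw [H_eq, integral_indicator hKm, hν, setIntegral_withDensity_eq_setIntegral_toReal_smul
      (by fun_prop) (ae_of_all _ fun _ => ENNReal.ofReal_lt_top) _ hKm]
    refine integral_congr_ae (ae_of_all _ fun z => ?_)
    simp only [he, hm, smul_eq_mul]
    rw [ENNReal.toReal_ofReal (by positivity), neg_add, Real.exp_add]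
    ring
  rw [hLHS, integral_comp_abs_abs H_int]
  simp only [inner_eq]
  rw [integral_const_mul, integral_add mE_int eM_int, hTint, hSint]
  ring
end
end

section
/- Let p ∈ (0,1], c_p = 1/Γ(1+1/p), let ν_p^2 have density (c_p/2)²·exp(−|x|^p−|y|^p) on ℝ², and let P = {(x,y) ∈ ℝ² : |x| ≤ w} be a strip. With T(u) = c_p·∫_u^∞ e^{−x^p} dx and S(u) = c_p·∫_0^u x^p e^{−x^p} dx, one has ∫_P (|x|^p + |y|^p) dν_p^2(x,y) = 1/p + S(w) − (1/p)·T(w). -/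
/-!
Write `f x = exp (-|x| ^ p)` and `g x = |x| ^ p * f x`. The density is a product, so the integrand
splits as `g x * f y + f x * g y`, and Fubini over `[-w, w] × ℝ` reduces the claim to
one-dimensional integrals. With the normalization `c_p`, the full-line integrals of `f` and `g` are
`1` and `1 / p` by the Gamma integral, and by evenness those over `[-w, w]` are `1 - T w` and `S w`.
Hence the integral is `S w * 1 + (1 - T w) * (1 / p)`.
-/

open MeasureTheory Real Set

noncomputable section

/-- The profile `x ^ q * exp (-x ^ p)` is integrable when composed with `|·|`, because its
integral over the half-line is a positive multiple of a value of `Gamma`, hence nonzero. -/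
lemma integrable_abs_rpow_mul_exp {p q : ℝ} (hp : 0 < p) (hq : -1 < q) :
    Integrable (fun x : ℝ => |x| ^ q * Real.exp (-(|x| ^ p))) := by
  -- a non-integrable function would have integral `0`
  refine Integrable.of_integral_ne_zero ?_
  rw [integral_comp_abs (f := fun x => x ^ q * Real.exp (-(x ^ p))),
    integral_rpow_mul_exp_neg_rpow hp hq]
  have : 0 < Real.Gamma ((q + 1) / p) := Real.Gamma_pos_of_pos (by apply div_pos <;> linarith)
  positivity

lemma setIntegral_Icc_comp_abs (h : ℝ → ℝ) {w : ℝ} (hw : 0 ≤ w) :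
    ∫ x in Icc (-w) w, h |x| = 2 * ∫ x in (0 : ℝ)..w, h x := by
  have h1 : ∫ x in Icc (-w) w, h |x| = ∫ x, (Iic w).indicator h |x| := by
    rw [← integral_indicator measurableSet_Icc]
    congr 1 with x
    simp [indicator, abs_le]
  rw [h1, integral_comp_abs (f := (Iic w).indicator h),
    setIntegral_indicator measurableSet_Iic, intervalIntegral.integral_of_le hw, Ioi_inter_Iic]

/-- **Formula for `M_p(P)` for a strip.** Let `p ∈ (0,1]`, `c_p = 1/Γ(1+1/p)`, let `ν_p²` have
density `(c_p/2)²·exp(-|x|^p - |y|^p)` on `ℝ²` and let `P = {(x,y) : |x| ≤ w}` be a strip.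
With `T u = c_p·∫_u^∞ exp(-x^p) dx` and `S u = c_p·∫_0^u x^p·exp(-x^p) dx`, one has
`∫_P (|x|^p + |y|^p) dν_p² = 1/p + S w - (1/p)·T w`. -/
theorem Mp_strip_formula (p : ℝ) (hp : p ∈ Set.Ioc (0 : ℝ) 1)
    (cp : ℝ) (hcp : cp = 1 / Real.Gamma (1 + 1 / p))
    (ν : Measure (ℝ × ℝ))
    (hν : ν = (volume : Measure (ℝ × ℝ)).withDensity fun z =>
      ENNReal.ofReal ((cp / 2) ^ 2 * Real.exp (-(|z.1| ^ p + |z.2| ^ p))))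
    (T S : ℝ → ℝ)
    (hT : ∀ u, 0 ≤ u → T u = cp * ∫ x in Set.Ioi u, Real.exp (-(x ^ p)))
    (hS : ∀ u, 0 ≤ u → S u = cp * ∫ x in (0 : ℝ)..u, x ^ p * Real.exp (-(x ^ p)))
    (w : ℝ) (hw : 0 ≤ w) :
    ∫ z in {z : ℝ × ℝ | |z.1| ≤ w}, (|z.1| ^ p + |z.2| ^ p) ∂ν =
      1 / p + S w - 1 / p * T w := by
  obtain ⟨hp0, -⟩ := hp
  have hG : 0 < Real.Gamma (1 + 1 / p) := Real.Gamma_pos_of_pos (by positivity)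
  have hc : cp * Real.Gamma (1 + 1 / p) = 1 := by rw [hcp]; field_simp
  have hf0 : ∫ x in Ioi (0 : ℝ), Real.exp (-(x ^ p)) = Real.Gamma (1 + 1 / p) := by
    rw [add_comm]; exact integral_exp_neg_rpow hp0
  have hg0 : ∫ x in Ioi (0 : ℝ), x ^ p * Real.exp (-(x ^ p))
      = 1 / p * Real.Gamma (1 + 1 / p) := by
    rw [integral_rpow_mul_exp_neg_rpow hp0 (by linarith), add_div, div_self hp0.ne']
  have hfi : Integrable (fun x : ℝ => Real.exp (-(|x| ^ p))) := by
    simpa using integrable_abs_rpow_mul_exp hp0 (q := 0) (by norm_num)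
  have hgi : Integrable (fun x : ℝ => |x| ^ p * Real.exp (-(|x| ^ p))) :=
    integrable_abs_rpow_mul_exp hp0 (by linarith)
  have hf : ∫ x : ℝ, Real.exp (-(|x| ^ p)) = 2 * Real.Gamma (1 + 1 / p) := by
    rw [integral_comp_abs (f := fun x => Real.exp (-(x ^ p))), hf0]
  have hg : ∫ x : ℝ, |x| ^ p * Real.exp (-(|x| ^ p)) = 2 * (1 / p * Real.Gamma (1 + 1 / p)) := by
    rw [integral_comp_abs (f := fun x => x ^ p * Real.exp (-(x ^ p))), hg0]
  have hfw := setIntegral_Icc_comp_abs (fun x => Real.exp (-(x ^ p))) hw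
  have hgw := setIntegral_Icc_comp_abs (fun x => x ^ p * Real.exp (-(x ^ p))) hw
  have hfpos : IntegrableOn (fun x : ℝ => Real.exp (-(x ^ p))) (Ioi 0) :=
    Integrable.of_integral_ne_zero (by rw [hf0]; exact hG.ne')
  have hsplit : (∫ x in (0 : ℝ)..w, Real.exp (-(x ^ p)))
      + ∫ x in Ioi w, Real.exp (-(x ^ p)) = Real.Gamma (1 + 1 / p) := by
    rw [← hf0]
    exact intervalIntegral.integral_interval_add_Ioi hfpos
      (hfpos.mono_set (Ioi_subset_Ioi hw))
  have hset : {z : ℝ × ℝ | |z.1| ≤ w} = Icc (-w) w ×ˢ univ := by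
    ext z; simp [abs_le]
  have hmeas : Measurable fun z : ℝ × ℝ =>
      ENNReal.ofReal ((cp / 2) ^ 2 * Real.exp (-(|z.1| ^ p + |z.2| ^ p))) := by
    fun_prop
  have hprod : (volume : Measure (ℝ × ℝ)).restrict (Icc (-w) w ×ˢ univ)
      = (volume.restrict (Icc (-w) w)).prod volume := by
    rw [Measure.volume_eq_prod, ← Measure.prod_restrict, Measure.restrict_univ]
  have hdens : ∀ z : ℝ × ℝ,
      (ENNReal.ofReal ((cp / 2) ^ 2 * Real.exp (-(|z.1| ^ p + |z.2| ^ p)))).toReal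
        • (|z.1| ^ p + |z.2| ^ p)
      = (cp / 2) ^ 2 * ((|z.1| ^ p * Real.exp (-(|z.1| ^ p))) * Real.exp (-(|z.2| ^ p))
        + Real.exp (-(|z.1| ^ p)) * (|z.2| ^ p * Real.exp (-(|z.2| ^ p)))) := by
    intro z
    rw [ENNReal.toReal_ofReal (by positivity), neg_add, Real.exp_add, smul_eq_mul]
    ring
  rw [hν, hset, setIntegral_withDensity_eq_setIntegral_toReal_smul hmeas
    (Filter.Eventually.of_forall fun _ => ENNReal.ofReal_lt_top) _
    (measurableSet_Icc.prod MeasurableSet.univ), hprod]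
  simp_rw [hdens]
  rw [integral_const_mul, integral_add (hgi.restrict.mul_prod hfi) (hfi.restrict.mul_prod hgi),
    integral_prod_mul (fun x : ℝ => |x| ^ p * Real.exp (-(|x| ^ p)))
      (fun y : ℝ => Real.exp (-(|y| ^ p))),
    integral_prod_mul (fun x : ℝ => Real.exp (-(|x| ^ p)))
      (fun y : ℝ => |y| ^ p * Real.exp (-(|y| ^ p))),
    hf, hg, hfw, hgw, hT w hw, hS w hw]
  -- The normalization `cp * Γ = 1` turns the full-line factors into `1` and `1 / p`, and
  -- `hsplit` turns the truncated mass into `1 - T w`.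
  linear_combination (cp * (∫ x in (0 : ℝ)..w, x ^ p * Real.exp (-(x ^ p)))
      + 1 / p * cp * (∫ x in (0 : ℝ)..w, Real.exp (-(x ^ p))) + 1 / p) * hc
      + 1 / p * cp * hsplit
end
end

section
/- Let p ∈ (0,1], c_p = 1/Γ(1+1/p), μ_+ the probability measure with density c_p·e^{−x^p} on [0,∞), T(u) = c_p·∫_u^∞ e^{−x^p} dx, S(u) = c_p·∫_0^u x^p e^{−x^p} dx, and Φ = S ∘ T^{−1}. For a ∈ [0,∞] let g_a = 1_{[a,∞)}. Then equality holds in the functional inequality: ∫ Φ(g_a) dμ_+ − Φ(∫ g_a dμ_+) = ∫_0^∞ g_a(x)·(x^p − 1/p) dμ_+(x); explicitly both sides equal (1/p)(1 − T(a)) − S(a). -/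
open MeasureTheory Real Set

noncomputable section

/-!
Write `w x = exp (-x^p)`. The function `Φ` is only evaluated at `0 = T ∞`, `1 = T 0` and
`∫ g dμ₊ = T a`, so `Φ ∘ g = (1 - g) / p` and `Φ (∫ g dμ₊) = S a`, which gives
`(1 - T a) / p - S a` on the left. On the right, `∫ g (x^p - 1/p) dμ₊` is the tail
`c_p ∫_a^∞ x^p w - T a / p`, and the total mass `c_p ∫_0^∞ x^p w = 1/p` turns the tail into
`1/p - S a`. The Gamma integrals behind the two normalisations are in Mathlib; the lemma
`integral_mu_plus` reduces integrals against `μ₊` to Lebesgue integrals on `(0, ∞)`, and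
`integral_weight_sub` is the final splitting at `a`.
-/

lemma integrableOn_weight {p : ℝ} (hp : 0 < p) :
    IntegrableOn (fun x : ℝ => Real.exp (-(x ^ p))) (Ioi 0) := by
  simpa using integrableOn_rpow_mul_exp_neg_rpow (p := p) (s := 0) (by norm_num) hp

lemma integrableOn_rpow_weight {p : ℝ} (hp : 0 < p) :
    IntegrableOn (fun x : ℝ => x ^ p * Real.exp (-(x ^ p))) (Ioi 0) :=
  integrableOn_rpow_mul_exp_neg_rpow (p := p) (s := p) (by linarith) hp

lemma integral_rpow_weight {p : ℝ} (hp : 0 < p) :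
    ∫ x in Ioi (0 : ℝ), x ^ p * Real.exp (-(x ^ p)) = 1 / p * Real.Gamma (1 + 1 / p) := by
  rw [integral_rpow_mul_exp_neg_rpow hp (by linarith)]
  congr 2
  field_simp

lemma integral_mu_plus {p cp : ℝ} (hc : 0 ≤ cp) (f : ℝ → ℝ) :
    ∫ x, f x ∂(((volume : Measure ℝ).restrict (Set.Ici 0)).withDensity fun x =>
      ENNReal.ofReal (cp * Real.exp (-(x ^ p)))) =
      cp * ∫ x in Ioi (0 : ℝ), Real.exp (-(x ^ p)) * f x := by
  rw [integral_withDensity_eq_integral_toReal_smul (by fun_prop)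
    (Filter.Eventually.of_forall fun _ => ENNReal.ofReal_lt_top),
    integral_Ici_eq_integral_Ioi, ← integral_const_mul]
  refine integral_congr_ae (Filter.Eventually.of_forall fun x => ?_)
  simp only [smul_eq_mul]
  rw [ENNReal.toReal_ofReal (mul_nonneg hc (Real.exp_pos _).le), mul_assoc]

lemma setIntegral_Ioi_mul_ite {b : ℝ} (hb : 0 ≤ b) (h : ℝ → ℝ) :
    ∫ x in Ioi (0 : ℝ), h x * (if b ≤ x then 1 else 0) = ∫ x in Ioi b, h x := by
  have e : (fun x => h x * (if b ≤ x then 1 else 0)) = (Ici b).indicator h := by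
    ext x
    by_cases hx : b ≤ x <;> simp [hx]
  have hs : (Ioi (0 : ℝ) ∩ Ici b : Set ℝ) =ᵐ[volume] Ioi b := by
    have h1 : (Ioi (0 : ℝ) ∩ Ici b : Set ℝ) =ᵐ[volume] (Ioi 0 ∩ Ioi b : Set ℝ) :=
      (Filter.EventuallyEq.refl _ _).inter Ioi_ae_eq_Ici.symm
    rwa [Ioi_inter_Ioi, sup_eq_right.2 hb] at h1
  rw [e, setIntegral_indicator measurableSet_Ici, setIntegral_congr_set hs]

/-- The tail of `x^p - 1/p` against the weight, expressed through the integral over `[0, b]`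
rather than over `[b, ∞)`. -/
lemma integral_weight_sub {p b : ℝ} (hp : 0 < p) (hb : 0 ≤ b) :
    ∫ x in Ioi b, Real.exp (-(x ^ p)) * (x ^ p - 1 / p) =
      1 / p * Real.Gamma (1 + 1 / p) - (∫ x in (0 : ℝ)..b, x ^ p * Real.exp (-(x ^ p)))
        - 1 / p * ∫ x in Ioi b, Real.exp (-(x ^ p)) := by
  have hsub : Ioi b ⊆ Ioi (0 : ℝ) := Ioi_subset_Ioi hb
  have h1 := (integrableOn_rpow_weight hp).mono_set hsub
  have h2 := (integrableOn_weight hp).mono_set hsub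
  have key := intervalIntegral.integral_interval_add_Ioi (integrableOn_rpow_weight hp) h1
  rw [integral_rpow_weight hp] at key
  rw [← key, ← integral_const_mul, add_sub_cancel_left, ← integral_sub h1 (h2.const_mul _)]
  congr 1
  ext x
  ring

/-- **Equality for indicator functions.** Let `p ∈ (0,1]`, `c_p = 1/Γ(1+1/p)`, let `μ₊` be
the probability measure with density `c_p·exp(-x^p)` on `[0,∞)`,
`T u = c_p·∫_u^∞ exp(-x^p) dx` (with `T ∞ = 0`), `S u = c_p·∫_0^u x^p·exp(-x^p) dx`
(with `S ∞ = 1/p`), and `Φ = S ∘ T⁻¹` (i.e. `Φ (T u) = S u` for all `u ∈ [0,∞]`).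
For `a ∈ [0,∞]` and `g_a = 1_{[a,∞)}` one has
`∫ Φ(g_a) dμ₊ - Φ(∫ g_a dμ₊) = ∫ g_a(x)·(x^p - 1/p) dμ₊(x)`, both sides being equal to
`(1/p)·(1 - T a) - S a`. -/
theorem equality_for_indicators (p : ℝ) (hp : p ∈ Set.Ioc (0 : ℝ) 1)
    (cp : ℝ) (hcp : cp = 1 / Real.Gamma (1 + 1 / p))
    (μplus : Measure ℝ)
    (hμ : μplus = ((volume : Measure ℝ).restrict (Set.Ici 0)).withDensity fun x =>
      ENNReal.ofReal (cp * Real.exp (-(x ^ p))))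
    (T S : ENNReal → ℝ)
    (hT : ∀ u : ℝ, 0 ≤ u →
      T (ENNReal.ofReal u) = cp * ∫ x in Set.Ioi u, Real.exp (-(x ^ p)))
    (hTtop : T ⊤ = 0)
    (hS : ∀ u : ℝ, 0 ≤ u →
      S (ENNReal.ofReal u) = cp * ∫ x in (0 : ℝ)..u, x ^ p * Real.exp (-(x ^ p)))
    (hStop : S ⊤ = 1 / p)
    (Φ : ℝ → ℝ) (hΦ : ∀ u : ENNReal, Φ (T u) = S u)
    (a : ENNReal) (g : ℝ → ℝ)
    (hg : ∀ x, g x = if a ≤ ENNReal.ofReal x then 1 else 0) :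
    (∫ x, Φ (g x) ∂μplus - Φ (∫ x, g x ∂μplus) =
        ∫ x, g x * (x ^ p - 1 / p) ∂μplus) ∧
      ∫ x, Φ (g x) ∂μplus - Φ (∫ x, g x ∂μplus) = 1 / p * (1 - T a) - S a := by
  have hp0 : 0 < p := hp.1
  have hG : 0 < Real.Gamma (1 + 1 / p) := Real.Gamma_pos_of_pos (by positivity)
  have hc : 0 < cp := by rw [hcp]; positivity
  have hcG : cp * Real.Gamma (1 + 1 / p) = 1 := by rw [hcp]; field_simp
  have hw : cp * ∫ x in Ioi (0 : ℝ), Real.exp (-(x ^ p)) = 1 := by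
    rw [integral_exp_neg_rpow hp0, add_comm, hcG]
  have hΦ0 : Φ 0 = 1 / p := by rw [← hTtop, hΦ, hStop]
  have hΦ1 : Φ 1 = 0 := by
    have hT0 := hT 0 le_rfl
    have hS0 := hS 0 le_rfl
    rw [hw] at hT0
    rw [intervalIntegral.integral_same, mul_zero] at hS0
    rw [← hT0, hΦ, hS0]
  have hΦg : ∀ x, Φ (g x) = 1 / p * (1 - g x) := by
    intro x
    rw [hg]
    split_ifs <;> simp [hΦ0, hΦ1]
  simp only [hΦg]
  subst hμ
  simp only [integral_mu_plus hc.le]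
  induction a using ENNReal.recTopCoe with
  | top =>
    have hg0 : ∀ x, g x = 0 := fun x => by simp [hg]
    simp only [hg0, hΦ0, hTtop, hStop, mul_zero, zero_mul, integral_zero, sub_zero, mul_one,
      integral_mul_const, ← mul_assoc, hw]
    simp
  | coe b =>
    have hb : (0 : ℝ) ≤ b := b.2
    have hbe : (b : ENNReal) = ENNReal.ofReal b := (ENNReal.ofReal_coe_nnreal).symm
    have hTb := hT b hb
    have hSb := hS b hb
    rw [← hbe] at hTb hSb
    have hint (h : ℝ → ℝ) :
        ∫ x in Ioi (0 : ℝ), h x * g x = ∫ x in Ioi (b : ℝ), h x := by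
      rw [← setIntegral_Ioi_mul_ite hb]
      refine setIntegral_congr_fun measurableSet_Ioi fun x hx => ?_
      have hx0 : (0 : ℝ) ≤ x := le_of_lt hx
      simp only [hg, hbe, ENNReal.ofReal_le_ofReal_iff hx0]
    have hI1 : cp * ∫ x in Ioi (0 : ℝ), Real.exp (-(x ^ p)) * g x = T b := by
      rw [hint, hTb]
    have hgi : IntegrableOn (fun x => Real.exp (-(x ^ p)) * g x) (Ioi 0) := by
      have hgm : Measurable g := by
        rw [funext hg]
        exact Measurable.ite (measurableSet_le measurable_const (by fun_prop))
          measurable_const measurable_const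
      refine (integrableOn_weight hp0).mul_bdd (c := 1) hgm.aestronglyMeasurable
        (Filter.Eventually.of_forall fun x => ?_)
      rw [hg]
      split_ifs <;> simp
    have hI2 : cp * ∫ x in Ioi (0 : ℝ), Real.exp (-(x ^ p)) * (1 / p * (1 - g x)) =
        1 / p * (1 - T b) := by
      have e : ∀ x, Real.exp (-(x ^ p)) * (1 / p * (1 - g x)) =
          1 / p * (Real.exp (-(x ^ p)) - Real.exp (-(x ^ p)) * g x) := fun x => by ring
      simp only [e]
      rw [integral_const_mul, integral_sub (integrableOn_weight hp0) hgi, ← hI1, ← hw]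
      ring
    have hI3 : cp * ∫ x in Ioi (0 : ℝ), Real.exp (-(x ^ p)) * (g x * (x ^ p - 1 / p)) =
        1 / p * (1 - T b) - S b := by
      have e : ∀ x, Real.exp (-(x ^ p)) * (g x * (x ^ p - 1 / p)) =
          Real.exp (-(x ^ p)) * (x ^ p - 1 / p) * g x := fun x => by ring
      simp only [e]
      rw [hint, integral_weight_sub hp0 hb, hTb, hSb]
      linear_combination (1 / p) * hcG
    rw [hI1, hI2, hI3, hΦ]
    exact ⟨rfl, rfl⟩
end
end

section
/- Let (Ω, ν) be a probability space and let Φ : [0,1] → ℝ be twice differentiable with Φ'' > 0 and 1/Φ'' concave. For measurable g : Ω → [0,1] define Ψ_Φ(g) = ∫_Ω Φ(g) dν − Φ(∫_Ω g dν). Then Ψ_Φ is convex: for all measurable f, g : Ω → [0,1] and all λ ∈ [0,1], Ψ_Φ(λf + (1−λ)g) ≤ λ·Ψ_Φ(f) + (1−λ)·Ψ_Φ(g). -/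
/-!
Write `F(x, y) = λ Φ(x) + (1 - λ) Φ(y) - Φ(λ x + (1 - λ) y)` on `[0,1]²`. The asserted inequality
is Jensen's inequality `F(∫ f, ∫ g) ≤ ∫ F(f, g)`, so it suffices that `F` lies above its tangent
plane at every point (`tangent_plane_le`); integrating the tangent plane at `(∫ f, ∫ g)` gives the
claim, since the linear part has integral zero.

`F` lies above its tangent planes because its second derivative in each direction `(a, b)`,
`λ a² Φ''(x) + (1 - λ) b² Φ''(y) - (λ a + (1 - λ) b)² Φ''(λ x + (1 - λ) y)`,
is nonnegative (`hessian_nonneg`): by Cauchy–Schwarz the first two terms are at least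
`(λ a + (1 - λ) b)² / (λ / Φ''(x) + (1 - λ) / Φ''(y))`, and concavity of `1 / Φ''` bounds this
from below by the last term.
-/

open MeasureTheory Real Set

noncomputable section

/-- Here `A`, `B`, `C` stand for the values of `Φ''` at `x`, `y` and `l * x + m * y`, and `h` is
the concavity of `1 / Φ''`. -/
lemma hessian_nonneg {l m a b A B C : ℝ} (hl : 0 ≤ l) (hm : 0 ≤ m)
    (hA : 0 < A) (hB : 0 < B) (hC : 0 < C) (h : l * (1 / A) + m * (1 / B) ≤ 1 / C) :
    (l * a + m * b) ^ 2 * C ≤ l * (a ^ 2 * A) + m * (b ^ 2 * B) := by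
  have hS : 0 ≤ l * (a ^ 2 * A) + m * (b ^ 2 * B) := by positivity
  have cauchy : (l * a + m * b) ^ 2 ≤
      (l * (a ^ 2 * A) + m * (b ^ 2 * B)) * (l * (1 / A) + m * (1 / B)) := by
    have e : (l * (a ^ 2 * A) + m * (b ^ 2 * B)) * (l * (1 / A) + m * (1 / B)) -
        (l * a + m * b) ^ 2 = l * m * ((a * A - b * B) ^ 2 / (A * B)) := by
      field_simp
      ring
    have : 0 ≤ l * m * ((a * A - b * B) ^ 2 / (A * B)) := by positivity
    linarith
  have := cauchy.trans (mul_le_mul_of_nonneg_left h hS)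
  rwa [mul_one_div, le_div_iff₀ hC] at this

lemma segment_mem {u v t : ℝ} (hu : u ∈ Icc (0 : ℝ) 1) (hv : v ∈ Icc (0 : ℝ) 1)
    (ht : t ∈ Icc (0 : ℝ) 1) : u + t * (v - u) ∈ Icc (0 : ℝ) 1 := by
  have := (convex_Icc (0 : ℝ) 1) hu hv (sub_nonneg.2 ht.2) ht.1 (by ring)
  convert this using 1
  simp only [smul_eq_mul]
  ring

lemma hasDerivWithinAt_segment {G G' : ℝ → ℝ}
    (hG : ∀ s ∈ Icc (0 : ℝ) 1, HasDerivWithinAt G (G' s) (Icc 0 1) s)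
    {u v t : ℝ} (hu : u ∈ Icc (0 : ℝ) 1) (hv : v ∈ Icc (0 : ℝ) 1) (ht : t ∈ Icc (0 : ℝ) 1) :
    HasDerivWithinAt (fun t => G (u + t * (v - u))) (G' (u + t * (v - u)) * (v - u))
      (Icc 0 1) t := by
  have h1 : HasDerivWithinAt (fun t : ℝ => u + t * (v - u)) (v - u) (Icc 0 1) t := by
    simpa using (((hasDerivAt_id t).mul_const (v - u)).const_add u).hasDerivWithinAt
  exact (hG _ (segment_mem hu hv ht)).comp t h1 fun s hs => segment_mem hu hv hs

/-- A function on `[0,1]` with nonnegative second derivative lies above its tangent at `0`. -/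
lemma add_deriv_zero_le {p p' p'' : ℝ → ℝ}
    (h1 : ∀ t ∈ Icc (0 : ℝ) 1, HasDerivWithinAt p (p' t) (Icc 0 1) t)
    (h2 : ∀ t ∈ Icc (0 : ℝ) 1, HasDerivWithinAt p' (p'' t) (Icc 0 1) t)
    (h3 : ∀ t ∈ Icc (0 : ℝ) 1, 0 ≤ p'' t) : p 0 + p' 0 ≤ p 1 := by
  obtain ⟨c, hc, hpc⟩ := exists_hasDerivAt_eq_slope p p' zero_lt_one
    (fun t ht => (h1 t ht).continuousWithinAt)
    (fun t ht => (h1 t (Ioo_subset_Icc_self ht)).hasDerivAt (Icc_mem_nhds ht.1 ht.2))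
  have hmono : MonotoneOn p' (Icc 0 1) :=
    monotoneOn_of_hasDerivWithinAt_nonneg (convex_Icc 0 1)
      (fun t ht => (h2 t ht).continuousWithinAt)
      (fun t ht => (h2 t (interior_subset ht)).mono interior_subset)
      (fun t ht => h3 t (interior_subset ht))
  have := hmono (left_mem_Icc.2 zero_le_one) (Ioo_subset_Icc_self hc) hc.1.le
  rw [hpc] at this
  linarith

/-- The function `(x, y) ↦ l * Φ x + m * Φ y - Φ (l * x + m * y)` on `[0,1]²` lies above its
tangent plane at `(p, q)`. -/
lemma tangent_plane_le {Φ Φ' Φ'' : ℝ → ℝ}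
    (hΦ' : ∀ s ∈ Icc (0 : ℝ) 1, HasDerivWithinAt Φ (Φ' s) (Icc 0 1) s)
    (hΦ'' : ∀ s ∈ Icc (0 : ℝ) 1, HasDerivWithinAt Φ' (Φ'' s) (Icc 0 1) s)
    (hpos : ∀ s ∈ Icc (0 : ℝ) 1, 0 < Φ'' s)
    (hconc : ConcaveOn ℝ (Icc 0 1) fun s => 1 / Φ'' s)
    {l m p q x y : ℝ} (hl : 0 ≤ l) (hm : 0 ≤ m) (hlm : l + m = 1)
    (hp : p ∈ Icc (0 : ℝ) 1) (hq : q ∈ Icc (0 : ℝ) 1)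
    (hx : x ∈ Icc (0 : ℝ) 1) (hy : y ∈ Icc (0 : ℝ) 1) :
    (l * Φ p + m * Φ q - Φ (l * p + m * q)) +
      (l * (Φ' p * (x - p)) + m * (Φ' q * (y - q)) -
        Φ' (l * p + m * q) * (l * x + m * y - (l * p + m * q))) ≤
      l * Φ x + m * Φ y - Φ (l * x + m * y) := by
  have hr : l * p + m * q ∈ Icc (0 : ℝ) 1 := convex_Icc (0 : ℝ) 1 hp hq hl hm hlm
  have hz : l * x + m * y ∈ Icc (0 : ℝ) 1 := convex_Icc (0 : ℝ) 1 hx hy hl hm hlm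
  have key := add_deriv_zero_le
    (fun t ht => (((hasDerivWithinAt_segment hΦ' hp hx ht).const_mul l).add
      ((hasDerivWithinAt_segment hΦ' hq hy ht).const_mul m)).sub
      (hasDerivWithinAt_segment hΦ' hr hz ht))
    (fun t ht => ((((hasDerivWithinAt_segment hΦ'' hp hx ht).mul_const (x - p)).const_mul l).add
      (((hasDerivWithinAt_segment hΦ'' hq hy ht).mul_const (y - q)).const_mul m)).sub
      ((hasDerivWithinAt_segment hΦ'' hr hz ht).mul_const _)) ?_
  · simpa using key
  · intro t ht
    have hX := segment_mem hp hx ht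
    have hY := segment_mem hq hy ht
    have hc := hconc.2 hX hY hl hm hlm
    have hZ := segment_mem hr hz ht
    have e : l • (p + t * (x - p)) + m • (q + t * (y - q)) =
        l * p + m * q + t * (l * x + m * y - (l * p + m * q)) := by
      simp only [smul_eq_mul]
      ring
    rw [e] at hc
    have := hessian_nonneg (a := x - p) (b := y - q) hl hm
      (hpos _ hX) (hpos _ hY) (hpos _ hZ) hc
    linear_combination this

lemma integrable_of_mem_Icc {Ω : Type*} [MeasurableSpace Ω] (ν : Measure Ω)
    [IsProbabilityMeasure ν] {f : Ω → ℝ} (hf : Measurable f)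
    (hf01 : ∀ ω, f ω ∈ Icc (0 : ℝ) 1) {G : ℝ → ℝ} (hG : ContinuousOn G (Icc 0 1)) :
    Integrable (fun ω => G (f ω)) ν := by
  -- `G` may be nonmeasurable off `[0,1]`, so it is replaced by a continuous extension.
  have e : (fun ω => G (f ω)) =
      fun ω => IccExtend (zero_le_one' ℝ) ((Icc (0 : ℝ) 1).domRestrict G) (f ω) := by
    funext ω
    rw [IccExtend_of_mem _ _ (hf01 ω), domRestrict_apply]
  obtain ⟨C, hC⟩ := isCompact_Icc.exists_bound_of_continuousOn hG
  refine Integrable.of_bound ?_ C (ae_of_all _ fun ω => hC _ (hf01 ω))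
  rw [e]
  exact (hG.domRestrict.Icc_extend'.measurable.comp hf).aestronglyMeasurable

lemma integral_mem_Icc {Ω : Type*} [MeasurableSpace Ω] (ν : Measure Ω)
    [IsProbabilityMeasure ν] {f : Ω → ℝ} (hf : Integrable f ν)
    (hf01 : ∀ ω, f ω ∈ Icc (0 : ℝ) 1) : ∫ ω, f ω ∂ν ∈ Icc (0 : ℝ) 1 :=
  (convex_Icc 0 1).integral_mem isClosed_Icc (ae_of_all _ hf01) hf

/-- **Latała–Oleszkiewicz convexity lemma.** Let `(Ω, ν)` be a probability space and let
`Φ : [0,1] → ℝ` be twice differentiable with `Φ'' > 0` and `1/Φ''` concave. Then the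
functional `Ψ_Φ(g) = ∫ Φ(g) dν - Φ(∫ g dν)` is convex on measurable functions
`g : Ω → [0,1]`. -/
theorem latala_oleszkiewicz_convexity {Ω : Type*} [MeasurableSpace Ω]
    (ν : Measure Ω) [IsProbabilityMeasure ν]
    (Φ Φ' Φ'' : ℝ → ℝ)
    (hΦ' : ∀ s ∈ Set.Icc (0 : ℝ) 1, HasDerivWithinAt Φ (Φ' s) (Set.Icc 0 1) s)
    (hΦ'' : ∀ s ∈ Set.Icc (0 : ℝ) 1, HasDerivWithinAt Φ' (Φ'' s) (Set.Icc 0 1) s)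
    (hpos : ∀ s ∈ Set.Icc (0 : ℝ) 1, 0 < Φ'' s)
    (hconc : ConcaveOn ℝ (Set.Icc 0 1) fun s => 1 / Φ'' s)
    (f g : Ω → ℝ) (hf : Measurable f) (hg : Measurable g)
    (hf01 : ∀ ω, f ω ∈ Set.Icc (0 : ℝ) 1) (hg01 : ∀ ω, g ω ∈ Set.Icc (0 : ℝ) 1)
    (lam : ℝ) (hlam : lam ∈ Set.Icc (0 : ℝ) 1) :
    ∫ ω, Φ (lam * f ω + (1 - lam) * g ω) ∂ν -
        Φ (∫ ω, (lam * f ω + (1 - lam) * g ω) ∂ν) ≤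
      lam * (∫ ω, Φ (f ω) ∂ν - Φ (∫ ω, f ω ∂ν)) +
        (1 - lam) * (∫ ω, Φ (g ω) ∂ν - Φ (∫ ω, g ω ∂ν)) := by
  obtain ⟨hl, hl1⟩ := hlam
  have hm : 0 ≤ 1 - lam := sub_nonneg.2 hl1
  have hlm : lam + (1 - lam) = 1 := by ring
  have hz01 : ∀ ω, lam * f ω + (1 - lam) * g ω ∈ Icc (0 : ℝ) 1 := fun ω =>
    convex_Icc (0 : ℝ) 1 (hf01 ω) (hg01 ω) hl hm hlm
  have hzm : Measurable fun ω => lam * f ω + (1 - lam) * g ω := by fun_prop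
  have hΦc : ContinuousOn Φ (Icc 0 1) := fun s hs => (hΦ' s hs).continuousWithinAt
  have If : Integrable f ν := integrable_of_mem_Icc ν hf hf01 continuousOn_id
  have Ig : Integrable g ν := integrable_of_mem_Icc ν hg hg01 continuousOn_id
  have IΦf := integrable_of_mem_Icc ν hf hf01 hΦc
  have IΦg := integrable_of_mem_Icc ν hg hg01 hΦc
  have IΦz := integrable_of_mem_Icc ν hzm hz01 hΦc
  have hz : ∫ ω, (lam * f ω + (1 - lam) * g ω) ∂ν =
      lam * ∫ ω, f ω ∂ν + (1 - lam) * ∫ ω, g ω ∂ν := by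
    rw [integral_add (If.const_mul _) (Ig.const_mul _), integral_const_mul, integral_const_mul]
  have hp := integral_mem_Icc ν If hf01
  have hq := integral_mem_Icc ν Ig hg01
  rw [hz]
  set p := ∫ ω, f ω ∂ν with hpdef
  set q := ∫ ω, g ω ∂ν with hqdef
  -- The tangent plane at `(p, q)`, with its terms grouped as `a * f + b * g + c`.
  obtain ⟨a, ha⟩ : ∃ a, a = lam * (Φ' p - Φ' (lam * p + (1 - lam) * q)) := ⟨_, rfl⟩
  obtain ⟨b, hb⟩ : ∃ b, b = (1 - lam) * (Φ' q - Φ' (lam * p + (1 - lam) * q)) := ⟨_, rfl⟩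
  obtain ⟨c, hc⟩ : ∃ c, c = lam * Φ p + (1 - lam) * Φ q - Φ (lam * p + (1 - lam) * q)
    - a * p - b * q := ⟨_, rfl⟩
  have Iab : Integrable (fun ω => a * f ω + b * g ω) ν := (If.const_mul a).add (Ig.const_mul b)
  have IΦfg : Integrable (fun ω => lam * Φ (f ω) + (1 - lam) * Φ (g ω)) ν :=
    (IΦf.const_mul _).add (IΦg.const_mul _)
  have hle : ∫ ω, (a * f ω + b * g ω + c) ∂ν ≤
      ∫ ω, (lam * Φ (f ω) + (1 - lam) * Φ (g ω) - Φ (lam * f ω + (1 - lam) * g ω)) ∂ν := by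
    refine integral_mono (Iab.add (integrable_const c)) (IΦfg.sub IΦz) fun ω => ?_
    have := tangent_plane_le hΦ' hΦ'' hpos hconc hl hm hlm hp hq (hf01 ω) (hg01 ω)
    subst hc ha hb
    linear_combination this
  rw [integral_add Iab (integrable_const c),
    integral_add (If.const_mul a) (Ig.const_mul b), integral_const_mul, integral_const_mul,
    integral_sub IΦfg IΦz,
    integral_add (IΦf.const_mul _) (IΦg.const_mul _), integral_const_mul, integral_const_mul,
    integral_const, probReal_univ, one_smul, ← hpdef, ← hqdef] at hle
  linear_combination hle - hc
end
end

section
/- Let p ∈ (0,1], c_p = 1/Γ(1+1/p), and let Ψ_p(x) = c_p·∫_0^x e^{−s^p} ds for x ≥ 0, so that Ψ_p(w) is the ν_p^n-measure of the strip {|x_1| ≤ w}. Then for every ideal K ⊆ ℝ^n with 0 < ν_p^n(K) < 1 and every t ≥ 1: ν_p^n(tK) ≥ Ψ_p(t·Ψ_p^{−1}(ν_p^n(K))), where ν_p^n is the measure on ℝ^n with density (c_p/2)^n·exp(−Σ_i|x_i|^p). -/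
/-!
Put `r = 1/t`. The claim is equivalent to: if `L` is an ideal with `ν L ≤ Ψ x`, then
`ν (r L) ≤ Ψ (r x)` (apply it to `L = tK`). The measure `ν` is the `n`-fold product of its
one-dimensional version `μ = nuOne p cp`, and `ν (r L)` is the measure of `L` under the `n`-fold
product of `σ`, the image of `μ` under dilation by `t`.

Slicing `L` along the first coordinate and inducting on `n` (`IsProfile.ideal`) leaves a
one-dimensional functional inequality: with `S (Ψ x) = Ψ (r x)` and `F : ℝ → [0,1]` nonincreasing
in `|y|`,
`∫ S (F) dσ ≤ S (∫ F dμ)`.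

Equivalently, the quasi-arithmetic mean `𝓜 F = S⁻¹ (∫ S (F) dσ)` is at most `∫ F dμ`. For the
indicator of a symmetric interval the two sides agree, and `F` is the average of the indicators of
its superlevel sets, so it suffices that `𝓜` is convex. Convexity is used in the form of a
supporting hyperplane of `𝓜` at `F` tested on symmetric intervals (`IsProfile.set_bound`),
followed by the layer cake formula (`layer_cake_comparison`).

The supporting hyperplane comes from a pointwise inequality (`tangent_inequality`). In the variable
`X = x ^ p` the law of `|y| ^ p` under `μ` is a Gamma law of shape `1/p ≥ 1`, whose density `ρ` is
log-concave, and replacing `μ` by `σ` multiplies `ρ` by a multiple of `exp (c X)`, where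
`c = 1 - r ^ p ≥ 0`. The pointwise inequality reduces to the fact that
`(U (X + δ) - U X) / ρ X` is nonincreasing in `X` for `U' = ρ` with `ρ` log-concave. Shape at least `1`,
that is `p ≤ 1`, is what makes `ρ` log-concave.
-/


open MeasureTheory Real Set Pointwise

noncomputable section

/-- A set `K ⊆ ℝⁿ` is an *ideal* if together with any point `x ∈ K` it contains the
box `[-|x 1|, |x 1|] × ⋯ × [-|x n|, |x n|]`. -/
def IsIdeal {n : ℕ} (K : Set (Fin n → ℝ)) : Prop :=
  ∀ x ∈ K, ∀ y : Fin n → ℝ, (∀ i, |y i| ≤ |x i|) → y ∈ K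

/-! ### Monotonicity from one-sided derivatives

The density `ρ` below may jump at `0`, so its primitives only have right derivatives. -/

theorem le_of_right_deriv_nonneg {f f' : ℝ → ℝ} (hc : Continuous f)
    (hd : ∀ x, HasDerivWithinAt f (f' x) (Ici x) x) {a b : ℝ} (hab : a ≤ b)
    (h : ∀ x ∈ Ico a b, 0 ≤ f' x) : f a ≤ f b :=
  image_le_of_deriv_right_le_deriv_boundary (f := fun _ => f a) (f' := fun _ => 0)
    continuousOn_const (fun x _ => hasDerivWithinAt_const x _ _) le_rfl hc.continuousOn
    (fun x _ => hd x) h (right_mem_Icc.2 hab)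

theorem ge_of_right_deriv_nonpos {f f' : ℝ → ℝ} (hc : Continuous f)
    (hd : ∀ x, HasDerivWithinAt f (f' x) (Ici x) x) {a b : ℝ} (hab : a ≤ b)
    (h : ∀ x ∈ Ico a b, f' x ≤ 0) : f b ≤ f a := by
  have := le_of_right_deriv_nonneg (f := fun x => - f x) (f' := fun x => - f' x) hc.neg
    (fun x => (hd x).neg) hab (fun x hx => by simpa using h x hx)
  simpa using this

theorem hasRightDeriv_comp_add {U : ℝ → ℝ} {d a x : ℝ}
    (h : HasDerivWithinAt U d (Ici (x + a)) (x + a)) :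
    HasDerivWithinAt (fun z => U (z + a)) d (Ici x) x := by
  have := HasDerivWithinAt.comp (h₂ := U) (h := fun z => z + a) (s := Ici x) x h
    ((hasDerivWithinAt_id x _).add_const a) (fun z hz => by simpa using hz)
  exact this.congr_deriv (mul_one d)

/-! ### The supporting hyperplane inequality for a log-concave density

Here `U' = ρ` and `V' = exp (c ·) ρ`, as right derivatives. Log-concavity of `ρ` is expressed by
`ρ X * ρ (Y + s) ≤ ρ (X + s) * ρ Y` for `X ≤ Y` and `0 ≤ s`. -/

section Tangent

variable {U V ρ : ℝ → ℝ} {c : ℝ}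

/-- For log-concave `ρ` and any `δ` of either sign, `(U (X + δ) - U X) / ρ X` is nonincreasing in
`X`; stated without division. -/
theorem increment_ratio_antitone (hUc : Continuous U)
    (hU : ∀ x, HasDerivWithinAt U (ρ x) (Ici x) x)
    (tp : ∀ X Y s, X ≤ Y → 0 ≤ s → ρ X * ρ (Y + s) ≤ ρ (X + s) * ρ Y)
    {X Y : ℝ} (hXY : X ≤ Y) (δ : ℝ) :
    (U (Y + δ) - U Y) * ρ X ≤ (U (X + δ) - U X) * ρ Y := by
  set f : ℝ → ℝ := fun z => (U (z + X) - U X) * ρ Y - (U (z + Y) - U Y) * ρ X with hf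
  have hc : Continuous f := by fun_prop
  have hd : ∀ z, HasDerivWithinAt f (ρ (z + X) * ρ Y - ρ (z + Y) * ρ X) (Ici z) z := fun z =>
    (((hasRightDeriv_comp_add (hU (z + X))).sub_const _).mul_const _).sub
      (((hasRightDeriv_comp_add (hU (z + Y))).sub_const _).mul_const _)
  have h0 : f 0 = 0 := by simp [hf]
  have : 0 ≤ f δ := by
    rcases le_total 0 δ with h | h
    · rw [← h0]
      refine le_of_right_deriv_nonneg hc hd h fun z hz => ?_
      have := tp X Y z hXY hz.1
      rw [add_comm z X, add_comm z Y]; linarith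
    · rw [← h0]
      refine ge_of_right_deriv_nonpos hc hd h fun z hz => ?_
      have := tp (z + X) (z + Y) (-z) (by linarith) (by linarith [hz.2])
      rw [show z + Y + -z = Y by ring, show z + X + -z = X by ring] at this
      linarith
  simp only [hf] at this
  rw [add_comm Y, add_comm X]; linarith

theorem tilt_increment_le (hUc : Continuous U) (hVc : Continuous V)
    (hU : ∀ x, HasDerivWithinAt U (ρ x) (Ici x) x)
    (hV : ∀ x, HasDerivWithinAt V (exp (c * x) * ρ x) (Ici x) x)
    (hρ : ∀ x, 0 ≤ ρ x) (hc : 0 ≤ c) (Z G : ℝ) :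
    exp (c * Z) * (U G - U Z) ≤ V G - V Z := by
  set f : ℝ → ℝ := fun z => V z - exp (c * Z) * U z with hf
  have hfc : Continuous f := by fun_prop
  have hd : ∀ z, HasDerivWithinAt f (exp (c * z) * ρ z - exp (c * Z) * ρ z) (Ici z) z := fun z =>
    (hV z).sub ((hU z).const_mul _)
  have : f Z ≤ f G := by
    rcases le_total Z G with h | h
    · refine le_of_right_deriv_nonneg hfc hd h fun z hz => ?_
      have : exp (c * Z) ≤ exp (c * z) := exp_le_exp.2 (mul_le_mul_of_nonneg_left hz.1 hc)
      nlinarith [hρ z]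
    · refine ge_of_right_deriv_nonpos hfc hd h fun z hz => ?_
      have : exp (c * z) ≤ exp (c * Z) := exp_le_exp.2 (mul_le_mul_of_nonneg_left hz.2.le hc)
      nlinarith [hρ z]
  simp only [hf] at this
  linarith

/-- Supporting hyperplane inequality. In terms of `φ = U ∘ V⁻¹` it says that the function
`(a, b) ↦ (φ b - φ a) / φ' a` lies below its tangent plane at `(V M, V Q)`. -/
theorem tangent_inequality (hUc : Continuous U) (hVc : Continuous V)
    (hU : ∀ x, HasDerivWithinAt U (ρ x) (Ici x) x)
    (hV : ∀ x, HasDerivWithinAt V (exp (c * x) * ρ x) (Ici x) x)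
    (hρ : ∀ x, 0 ≤ ρ x) (hc : 0 ≤ c)
    (tp : ∀ X Y s, X ≤ Y → 0 ≤ s → ρ X * ρ (Y + s) ≤ ρ (X + s) * ρ Y)
    {M : ℝ} (Q : ℝ) (hM : 0 < ρ M) :
    ∃ α, ∀ X G, (U G - U X) * exp (c * X) ≤
      (U Q - U M) * exp (c * M) + α * (V X - V M) + exp (c * (M - Q)) * (V G - V Q) := by
  obtain ⟨δ, rfl⟩ : ∃ δ, Q = M + δ := ⟨Q - M, by ring⟩
  set k := (U (M + δ) - U M) / ρ M with hk
  refine ⟨c * k - 1, fun X G => ?_⟩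
  -- For fixed `X` the gap between the two sides is smallest at `G = X + δ`; at that `G`, it is
  -- `W X - W M`.
  set W : ℝ → ℝ := fun z => (c * k - 1) * V z + exp (-(c * δ)) * V (z + δ)
    - (U (z + δ) - U z) * exp (c * z) with hW
  have hWc : Continuous W := by fun_prop
  have hd : ∀ z, HasDerivWithinAt W (c * exp (c * z) * (k * ρ z - (U (z + δ) - U z)))
      (Ici z) z := fun z => by
    have he : HasDerivWithinAt (fun z => exp (c * z)) (exp (c * z) * c) (Ici z) z := by
      simpa using ((hasDerivAt_id z).const_mul c).exp.hasDerivWithinAt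
    have := (((hV z).const_mul (c * k - 1)).add
      ((hasRightDeriv_comp_add (hV (z + δ))).const_mul (exp (-(c * δ))))).sub
      (((hasRightDeriv_comp_add (hU (z + δ))).sub (hU z)).mul he)
    refine this.congr_deriv ?_
    have h2 : exp (-(c * δ)) * exp (c * (z + δ)) = exp (c * z) := by
      rw [← exp_add]; congr 1; ring
    rw [← mul_assoc (exp (-(c * δ))), h2]
    simp only [Pi.sub_apply]
    ring
  have hmono : W M ≤ W X := by
    rcases le_total M X with h | h
    · refine le_of_right_deriv_nonneg hWc hd h fun z hz => ?_
      refine mul_nonneg (by positivity) (sub_nonneg.2 ?_)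
      rw [hk, div_mul_eq_mul_div, le_div_iff₀ hM]
      exact increment_ratio_antitone hUc hU tp hz.1 δ
    · refine ge_of_right_deriv_nonpos hWc hd h fun z hz => ?_
      refine mul_nonpos_of_nonneg_of_nonpos (by positivity) (sub_nonpos.2 ?_)
      rw [hk, div_mul_eq_mul_div, div_le_iff₀ hM]
      exact increment_ratio_antitone hUc hU tp hz.2.le δ
  have hG := tilt_increment_le hUc hVc hU hV hρ hc (X + δ) G
  have hG' : exp (c * X) * (U G - U (X + δ)) ≤ exp (-(c * δ)) * (V G - V (X + δ)) := by
    have := mul_le_mul_of_nonneg_left hG (exp_pos (-(c * δ))).le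
    rw [← mul_assoc, ← exp_add] at this
    rwa [show -(c * δ) + c * (X + δ) = c * X by ring] at this
  simp only [hW] at hmono
  rw [show c * (M - (M + δ)) = -(c * δ) by ring]
  linarith

end Tangent

/-! ### The power substitution `X = x ^ p` -/

theorem powDensity_right_deriv {Φ φ : ℝ → ℝ} {q : ℝ} (hq : 1 ≤ q)
    (hΦ : ∀ x, 0 ≤ x → HasDerivAt Φ (φ x) x) (X : ℝ) :
    HasDerivWithinAt (fun X => Φ ((max X 0) ^ q))
      (if X < 0 then 0 else φ (X ^ q) * (q * X ^ (q - 1))) (Ici X) X := by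
  split_ifs with h
  · refine ((hasDerivAt_const X (Φ ((0 : ℝ) ^ q))).congr_of_eventuallyEq ?_).hasDerivWithinAt
    filter_upwards [Iio_mem_nhds h] with y hy
    rw [max_eq_right (le_of_lt hy)]
  · have h : 0 ≤ X := not_lt.1 h
    have h1 := ((hΦ (X ^ q) (rpow_nonneg h q)).comp X
      (hasDerivAt_rpow_const (p := q) (Or.inr hq))).hasDerivWithinAt (s := Ici X)
    refine h1.congr (fun y hy => ?_) ?_
    · simp [max_eq_left (h.trans hy)]
    · simp [max_eq_left h]

/-- The function `C X ^ (1/p - 1) exp (-X)` on `[0, ∞)`, extended by `0` to the negative axis: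
up to normalization, the density of the Gamma law of shape `1/p`. -/
def powDensity (C p X : ℝ) : ℝ := if X < 0 then 0 else C * X ^ (1 / p - 1) * exp (-X)

/-- Log-concavity of the Gamma density; this uses `1/p - 1 ≥ 0`. -/
theorem powDensity_tp {C p : ℝ} (hC : 0 ≤ C) (hp : p ∈ Ioc (0 : ℝ) 1) (X Y s : ℝ)
    (hXY : X ≤ Y) (hs : 0 ≤ s) :
    powDensity C p X * powDensity C p (Y + s) ≤ powDensity C p (X + s) * powDensity C p Y := by
  have hk : 0 ≤ 1 / p - 1 := by
    rw [sub_nonneg, le_div_iff₀ hp.1]; linarith [hp.2]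
  have hnn : ∀ x, 0 ≤ powDensity C p x := fun x => by
    unfold powDensity
    split_ifs with h
    · exact le_rfl
    · have := rpow_nonneg (not_lt.1 h) (1 / p - 1)
      positivity
  rcases lt_or_ge X 0 with h | h
  · rw [show powDensity C p X = 0 by simp [powDensity, h], zero_mul]
    exact mul_nonneg (hnn _) (hnn _)
  have hY := h.trans hXY
  simp only [powDensity, not_lt.2 h, not_lt.2 hY, not_lt.2 (add_nonneg h hs),
    not_lt.2 (add_nonneg hY hs), if_false]
  have key : X ^ (1 / p - 1) * (Y + s) ^ (1 / p - 1) ≤ (X + s) ^ (1 / p - 1) * Y ^ (1 / p - 1) := by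
    rw [← mul_rpow h (add_nonneg hY hs), ← mul_rpow (add_nonneg h hs) hY]
    exact rpow_le_rpow (mul_nonneg h (add_nonneg hY hs)) (by nlinarith) hk
  have he : exp (-X) * exp (-(Y + s)) = exp (-(X + s)) * exp (-Y) := by
    rw [← exp_add, ← exp_add]; congr 1; ring
  calc _ = (C * C) * (exp (-X) * exp (-(Y + s))) * (X ^ (1 / p - 1) * (Y + s) ^ (1 / p - 1)) := by
        ring
    _ ≤ (C * C) * (exp (-X) * exp (-(Y + s))) * ((X + s) ^ (1 / p - 1) * Y ^ (1 / p - 1)) :=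
        mul_le_mul_of_nonneg_left key (by positivity)
    _ = _ := by rw [he]; ring

/-- The supporting hyperplane inequality in the original variable, for `U (x ^ p) = Ψ x` and
`V (x ^ p) = Ψ (r x) / r`. -/
theorem tangent_power {p r C : ℝ} {Ψ : ℝ → ℝ} (hp : p ∈ Ioc (0 : ℝ) 1) (hr : r ∈ Ioc (0 : ℝ) 1)
    (hC : 0 < C) (hΨc : Continuous Ψ)
    (hΨ : ∀ x, 0 ≤ x → HasDerivAt Ψ (C * exp (-(x ^ p))) x) {m q : ℝ} (hm : 0 < m) (hq : 0 ≤ q) :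
    ∃ α, ∀ x g, 0 ≤ x → 0 ≤ g → (Ψ g - Ψ x) * exp ((1 - r ^ p) * x ^ p) ≤
      (Ψ q - Ψ m) * exp ((1 - r ^ p) * m ^ p) + α * (Ψ (r * x) - Ψ (r * m)) +
      exp ((1 - r ^ p) * (m ^ p - q ^ p)) / r * (Ψ (r * g) - Ψ (r * q)) := by
  have hp0 := hp.1
  have hr0 := hr.1
  have hk : 1 ≤ 1 / p := by rw [le_div_iff₀ hp.1]; linarith [hp.2]
  have hinv : ∀ X : ℝ, 0 ≤ X → (X ^ (1 / p)) ^ p = X := fun X hX => by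
    rw [← rpow_mul hX, one_div_mul_cancel hp0.ne', rpow_one]
  have hinv' : ∀ x : ℝ, 0 ≤ x → (max (x ^ p) 0) ^ (1 / p) = x := fun x hx => by
    rw [max_eq_left (rpow_nonneg hx p), ← rpow_mul hx, mul_one_div_cancel hp0.ne', rpow_one]
  have hcr : Continuous fun X : ℝ => (max X 0) ^ (1 / p) :=
    (continuous_rpow_const (by positivity)).comp (by fun_prop)
  have hrp : r ^ p ≤ 1 := rpow_le_one hr0.le hr.2 hp0.le
  have hU : ∀ X, HasDerivWithinAt (fun X => Ψ ((max X 0) ^ (1 / p))) (powDensity (C / p) p X)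
      (Ici X) X := fun X => by
    refine (powDensity_right_deriv hk hΨ X).congr_deriv ?_
    unfold powDensity
    split_ifs with h
    · rfl
    · rw [hinv X (not_lt.1 h)]; ring
  have hV : ∀ X, HasDerivWithinAt (fun X => (1 / r) * Ψ (r * (max X 0) ^ (1 / p)))
      (exp ((1 - r ^ p) * X) * powDensity (C / p) p X) (Ici X) X := fun X => by
    have h1 : ∀ x, 0 ≤ x → HasDerivAt (fun x => Ψ (r * x)) (C * exp (-((r * x) ^ p)) * r) x :=
      fun x hx => by
        have := (hΨ (r * x) (by positivity)).comp x ((hasDerivAt_id x).const_mul r)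
        simpa [Function.comp_def] using this
    refine ((powDensity_right_deriv hk h1 X).const_mul (1 / r)).congr_deriv ?_
    unfold powDensity
    split_ifs with h
    · simp
    · have h := not_lt.1 h
      rw [mul_rpow hr0.le (rpow_nonneg h _), hinv X h]
      have : exp (-(r ^ p * X)) = exp ((1 - r ^ p) * X) * exp (-X) := by
        rw [← exp_add]; congr 1; ring
      rw [this]; field_simp
  have hnn : ∀ x, 0 ≤ powDensity (C / p) p x := fun x => by
    unfold powDensity
    split_ifs with h
    · exact le_rfl
    · have := rpow_nonneg (not_lt.1 h) (1 / p - 1)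
      positivity
  have hpos : 0 < powDensity (C / p) p (m ^ p) := by
    have : 0 < m ^ p := rpow_pos_of_pos hm p
    have := rpow_pos_of_pos this (1 / p - 1)
    rw [powDensity, if_neg (not_lt.2 (rpow_nonneg hm.le p))]; positivity
  have hVc : Continuous fun X => (1 / r) * Ψ (r * (max X 0) ^ (1 / p)) :=
    continuous_const.mul (hΨc.comp (continuous_const.mul hcr))
  obtain ⟨α, hα⟩ := tangent_inequality (hΨc.comp hcr) hVc hU hV hnn
    (sub_nonneg.2 hrp) (powDensity_tp (by positivity) hp) (q ^ p) hpos
  refine ⟨α * (1 / r), fun x g hx hg => ?_⟩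
  have := hα (x ^ p) (g ^ p)
  simp only [hinv' x hx, hinv' g hg, hinv' q hq, hinv' m hm.le, Function.comp_def] at this
  refine this.trans (le_of_eq ?_)
  ring

/-! ### The one-dimensional functional inequality -/

/-- The setting for parameters `p, r ∈ (0, 1]` and `C > 0`: `Ψ` is an increasing bijection of `[0, ∞)` onto `[0, 1)` with derivative `C exp (-x ^ p)`,
and the symmetric intervals of half-width `a`, with or without endpoints, have `μ`-measure `Ψ a`
and `σ`-measure `Ψ (r a)`. -/
structure IsProfile (p r C : ℝ) (Ψ : ℝ → ℝ) (μ σ : Measure ℝ) : Prop where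
  hp : p ∈ Ioc (0 : ℝ) 1
  hr : r ∈ Ioc (0 : ℝ) 1
  hC : 0 < C
  cont : Continuous Ψ
  deriv : ∀ x, 0 ≤ x → HasDerivAt Ψ (C * exp (-(x ^ p))) x
  zero : Ψ 0 = 0
  strictMono : StrictMonoOn Ψ (Ici 0)
  lim : Filter.Tendsto Ψ Filter.atTop (nhds 1)
  strip : ∀ a, 0 ≤ a → ∀ A, {y | |y| < a} ⊆ A → A ⊆ {y | |y| ≤ a} → μ.real A = Ψ a
  strip' : ∀ a, 0 ≤ a → ∀ A, {y | |y| < a} ⊆ A → A ⊆ {y | |y| ≤ a} → σ.real A = Ψ (r * a)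

namespace IsProfile

variable {p r C : ℝ} {Ψ : ℝ → ℝ} {μ σ : Measure ℝ}

theorem nonneg (H : IsProfile p r C Ψ μ σ) {x : ℝ} (hx : 0 ≤ x) : 0 ≤ Ψ x := by
  rw [← H.zero]; exact H.strictMono.monotoneOn (mem_Ici.2 le_rfl) hx hx

theorem lt_one (H : IsProfile p r C Ψ μ σ) {x : ℝ} (hx : 0 ≤ x) : Ψ x < 1 := by
  have h1 : Ψ x < Ψ (x + 1) := H.strictMono hx (mem_Ici.2 (by linarith)) (by linarith)
  refine h1.trans_le (ge_of_tendsto H.lim ?_)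
  filter_upwards [Filter.eventually_ge_atTop (x + 1)] with y hy
  exact H.strictMono.monotoneOn (mem_Ici.2 (by linarith)) (mem_Ici.2 (by linarith)) hy

theorem exists_eq (H : IsProfile p r C Ψ μ σ) {u N : ℝ} (hN : 0 ≤ N) (hu : u ∈ Icc 0 (Ψ N)) :
    ∃ x ∈ Icc 0 N, Ψ x = u := by
  have := intermediate_value_Icc hN H.cont.continuousOn
  rw [H.zero] at this
  exact this hu

/-- The normalized supporting hyperplane inequality, for the values `l = Ψ 0 = 0` and
`l = Ψ ∞ = 1` taken by an indicator function. -/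
theorem tangent (H : IsProfile p r C Ψ μ σ) {m q : ℝ} (hm : 0 < m) (hq : 0 ≤ q) :
    ∃ α β, ∀ x, 0 ≤ x → ∀ l ∈ ({0, 1} : Set ℝ),
      (l - Ψ x) * exp ((1 - r ^ p) * (x ^ p - m ^ p)) ≤
      (Ψ q - Ψ m) + α * (Ψ (r * x) - Ψ (r * m)) + β * (l - Ψ (r * q)) := by
  obtain ⟨α, hα⟩ := tangent_power H.hp H.hr H.hC H.cont H.deriv hm hq
  set e := exp (-((1 - r ^ p) * m ^ p)) with he
  set β := exp ((1 - r ^ p) * (m ^ p - q ^ p)) / r with hβ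
  have key : ∀ x g, 0 ≤ x → 0 ≤ g → (Ψ g - Ψ x) * exp ((1 - r ^ p) * (x ^ p - m ^ p)) ≤
      (Ψ q - Ψ m) + (e * α) * (Ψ (r * x) - Ψ (r * m)) + (e * β) * (Ψ (r * g) - Ψ (r * q)) := by
    intro x g hx hg
    have h1 : exp ((1 - r ^ p) * (x ^ p - m ^ p)) = e * exp ((1 - r ^ p) * x ^ p) := by
      rw [he, ← exp_add]; congr 1; ring
    have h2 : e * exp ((1 - r ^ p) * m ^ p) = 1 := by
      rw [he, ← exp_add]; simp
    have := mul_le_mul_of_nonneg_left (hα x g hx hg) (exp_pos (-((1 - r ^ p) * m ^ p))).le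
    rw [← he] at this
    rw [h1]
    linear_combination this + (Ψ q - Ψ m) * h2
  refine ⟨e * α, e * β, fun x hx l hl => ?_⟩
  rcases hl with rfl | hl
  · have := key x 0 hx le_rfl
    simpa [H.zero] using this
  · rw [mem_singleton_iff] at hl
    subst hl
    have hlim : Filter.Tendsto (fun g => Ψ (r * g)) Filter.atTop (nhds 1) :=
      H.lim.comp (Filter.tendsto_id.const_mul_atTop H.hr.1)
    refine le_of_tendsto_of_tendsto ((H.lim.sub_const (Ψ x)).mul_const _)
      (((hlim.sub_const (Ψ (r * q))).const_mul (e * β)).const_add _) ?_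
    filter_upwards [Filter.eventually_ge_atTop 0] with g hg
    exact key x g hx hg

/-- The supporting hyperplane inequality at `F = Ψ ∘ f`, where `m` is such that
`∫ Ψ (r f) dσ = Ψ (r m)`, tested against a set `A` having the measures of an interval. -/
theorem set_bound (H : IsProfile p r C Ψ μ σ) [IsProbabilityMeasure σ]
    {f : ℝ → ℝ} {N m a : ℝ} (hf : Measurable f) (hf0 : ∀ y, 0 ≤ f y) (hfN : ∀ y, f y ≤ N)
    (hm : 0 < m) (hmf : ∫ y, Ψ (r * f y) ∂σ = Ψ (r * m)) {A : Set ℝ} (hA : MeasurableSet A)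
    (ha : 0 ≤ a) (hμ : μ.real A = Ψ a) (hσ : σ.real A = Ψ (r * a)) :
    (∫ y in A, exp ((1 - r ^ p) * (f y ^ p - m ^ p)) ∂σ) +
      (Ψ m - ∫ y, Ψ (f y) * exp ((1 - r ^ p) * (f y ^ p - m ^ p)) ∂σ) ≤ μ.real A := by
  obtain ⟨α, β, h⟩ := H.tangent hm ha
  have hp0 := H.hp.1
  have hc : 0 ≤ 1 - r ^ p := sub_nonneg.2 (rpow_le_one H.hr.1.le H.hr.2 H.hp.1.le)
  set θ : ℝ → ℝ := fun y => exp ((1 - r ^ p) * (f y ^ p - m ^ p)) with hθ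
  have hθm : Measurable θ := by fun_prop
  have hθb : ∀ y, ‖θ y‖ ≤ exp ((1 - r ^ p) * (N ^ p - m ^ p)) := fun y => by
    rw [Real.norm_of_nonneg (exp_pos _).le]
    refine exp_le_exp.2 (mul_le_mul_of_nonneg_left ?_ hc)
    have := rpow_le_rpow (hf0 y) (hfN y) hp0.le
    linarith
  have hΨm := H.cont.measurable
  have hF1 : ∀ x, 0 ≤ x → ‖Ψ x‖ ≤ 1 := fun x hx => by
    rw [Real.norm_of_nonneg (H.nonneg hx)]; exact (H.lt_one hx).le
  have iθ : Integrable θ σ := Integrable.of_bound hθm.aestronglyMeasurable _ (.of_forall hθb)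
  have iF : Integrable (fun y => Ψ (f y) * θ y) σ :=
    iθ.bdd_mul (hΨm.comp hf).aestronglyMeasurable (.of_forall fun y => hF1 _ (hf0 y))
  have iR : Integrable (fun y => Ψ (r * f y)) σ :=
    Integrable.of_bound (hΨm.comp (hf.const_mul r)).aestronglyMeasurable 1
      (.of_forall fun y => hF1 _ (mul_nonneg H.hr.1.le (hf0 y)))
  have iA : Integrable (A.indicator (fun _ => (1 : ℝ))) σ :=
    (integrable_const 1).indicator hA
  have iR' : Integrable (fun y => α * (Ψ (r * f y) - Ψ (r * m))) σ :=
    (iR.sub (integrable_const _)).const_mul α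
  have iA' : Integrable (fun y => β * (A.indicator (fun _ => (1 : ℝ)) y - Ψ (r * a))) σ :=
    (iA.sub (integrable_const _)).const_mul β
  have iRA : Integrable (fun y => (Ψ a - Ψ m) + α * (Ψ (r * f y) - Ψ (r * m))) σ :=
    (integrable_const _).add iR'
  have key : ∫ y, (A.indicator θ y - Ψ (f y) * θ y) ∂σ ≤
      ∫ y, ((Ψ a - Ψ m) + α * (Ψ (r * f y) - Ψ (r * m)) +
        β * (A.indicator (fun _ => (1 : ℝ)) y - Ψ (r * a))) ∂σ := by
    refine integral_mono ((iθ.indicator hA).sub iF) (iRA.add iA') fun y => ?_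
    by_cases hy : y ∈ A
    · have := h (f y) (hf0 y) 1 (by simp)
      simp only [indicator_of_mem hy]
      linarith
    · have := h (f y) (hf0 y) 0 (by simp)
      simp only [indicator_of_notMem hy]
      linarith
  rw [integral_sub (iθ.indicator hA) iF, integral_indicator hA,
    integral_add iRA iA', integral_add (integrable_const _) iR',
    integral_const_mul, integral_const_mul, integral_sub iR (integrable_const _),
    integral_sub iA (integrable_const _), hmf, integral_indicator hA] at key
  simp [hσ] at key
  rw [hμ]
  linarith

end IsProfile

/-- Averaging over superlevel sets: if `τ A + κ ≤ μ A` for the superlevel sets `A` of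
`F : ℝ → [0,1]`, then `∫ F dτ + κ ≤ ∫ F dμ`. -/
theorem layer_cake_comparison {μ τ : Measure ℝ} [IsFiniteMeasure μ] [IsFiniteMeasure τ]
    {F : ℝ → ℝ} {κ : ℝ} (hF : Measurable F) (hF0 : ∀ y, 0 ≤ F y) (hF1 : ∀ y, F y ≤ 1)
    (h : ∀ s ∈ Ioc (0 : ℝ) 1, τ.real {y | s < F y} + κ ≤ μ.real {y | s < F y}) :
    ∫ y, F y ∂τ + κ ≤ ∫ y, F y ∂μ := by
  have key : ∀ (ν : Measure ℝ) [IsFiniteMeasure ν],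
      IntegrableOn (fun s => ν.real {y | s < F y}) (Ioc 0 1) ∧
      ∫ y, F y ∂ν = ∫ s in Ioc (0 : ℝ) 1, ν.real {y | s < F y} := by
    intro ν _
    constructor
    · have : Antitone fun s => ν.real {y | s < F y} := fun s t hst =>
        measureReal_mono fun y (hy : t < F y) => lt_of_le_of_lt hst hy
      exact ((this.antitoneOn _).integrableOn_isCompact isCompact_Icc).mono_set Ioc_subset_Icc_self
    · rw [(Integrable.of_bound hF.aestronglyMeasurable 1 (.of_forall fun y => by
        rw [Real.norm_of_nonneg (hF0 y)]; exact hF1 y)).integral_eq_integral_meas_lt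
        (.of_forall hF0)]
      refine setIntegral_eq_of_subset_of_forall_sdiff_eq_zero measurableSet_Ioi
        Ioc_subset_Ioi_self fun s hs => ?_
      have : {y | s < F y} = ∅ := by
        ext y
        have : 1 < s := by
          by_contra! hh
          exact hs.2 ⟨hs.1, hh⟩
        simpa using (hF1 y).trans this.le
      simp [this]
  rw [(key μ).2, (key τ).2]
  have hκ : κ = ∫ s in Ioc (0 : ℝ) 1, κ := by simp
  rw [hκ, ← integral_add (key τ).1 (by simp)]
  exact setIntegral_mono_on ((key τ).1.add (by simp)) (key μ).1 measurableSet_Ioc h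

theorem measurable_of_abs_antitone {f : ℝ → ℝ} (h : ∀ y z, |y| ≤ |z| → f z ≤ f y) :
    Measurable f := by
  have h1 : Antitone fun z => f (max z 0) := fun y z hyz => h _ _ (by
    rw [abs_of_nonneg (le_max_right _ _), abs_of_nonneg (le_max_right _ _)]
    exact max_le_max_right 0 hyz)
  have h2 : f = (fun z => f (max z 0)) ∘ fun y => |y| := by
    ext y
    simp only [Function.comp, max_eq_left (abs_nonneg y)]
    exact le_antisymm (h _ _ (by simp)) (h _ _ (by simp))
  rw [h2]
  exact h1.measurable.comp measurable_norm

theorem exists_strip {A : Set ℝ} {N : ℝ} (hA : ∀ y z, |y| ≤ |z| → z ∈ A → y ∈ A)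
    (hN : ∀ y ∈ A, |y| ≤ N) :
    ∃ a, 0 ≤ a ∧ {y | |y| < a} ⊆ A ∧ A ⊆ {y | |y| ≤ a} := by
  refine ⟨sSup ((fun y => |y|) '' A), Real.sSup_nonneg ?_, fun y hy => ?_, fun y hy => ?_⟩
  · rintro _ ⟨y, -, rfl⟩
    exact abs_nonneg y
  · have hy : |y| < sSup ((fun y => |y|) '' A) := hy
    rcases A.eq_empty_or_nonempty with rfl | hne
    · simp only [image_empty, Real.sSup_empty] at hy
      exact absurd hy (not_lt.2 (abs_nonneg y))
    · obtain ⟨_, ⟨z, hz, rfl⟩, hyz⟩ := exists_lt_of_lt_csSup (hne.image _) hy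
      exact hA y z hyz.le hz
  · refine le_csSup ⟨N, ?_⟩ ⟨y, hy, rfl⟩
    rintro _ ⟨z, hz, rfl⟩
    exact hN z hz

namespace IsProfile

variable {p r C : ℝ} {Ψ : ℝ → ℝ} {μ σ : Measure ℝ}

/-- The functional inequality for `F = Ψ ∘ f` with `f` bounded and of bounded support, so that `F`
stays away from `1` and its superlevel sets at positive levels are bounded intervals. -/
theorem bounded_step (H : IsProfile p r C Ψ μ σ) [IsProbabilityMeasure μ] [IsProbabilityMeasure σ]
    {f : ℝ → ℝ} {N : ℝ} (hf : ∀ y z, |y| ≤ |z| → f z ≤ f y) (hf0 : ∀ y, 0 ≤ f y)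
    (hfN : ∀ y, f y ≤ N) (hfs : ∀ y, N < |y| → f y = 0) {x : ℝ} (hx : 0 ≤ x)
    (h : ∫ y, Ψ (f y) ∂μ ≤ Ψ x) : ∫ y, Ψ (r * f y) ∂σ ≤ Ψ (r * x) := by
  have hfm := measurable_of_abs_antitone hf
  have hN : 0 ≤ N := (hf0 0).trans (hfN 0)
  have hr := H.hr.1
  have hΨm := H.cont.measurable
  have hmono := H.strictMono.monotoneOn
  have hF1 : ∀ x, 0 ≤ x → ‖Ψ x‖ ≤ 1 := fun x hx => by
    rw [Real.norm_of_nonneg (H.nonneg hx)]; exact (H.lt_one hx).le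
  have iR : Integrable (fun y => Ψ (r * f y)) σ :=
    Integrable.of_bound (hΨm.comp (hfm.const_mul r)).aestronglyMeasurable 1
      (.of_forall fun y => hF1 _ (mul_nonneg hr.le (hf0 y)))
  have hB : ∫ y, Ψ (r * f y) ∂σ ∈ Icc 0 (Ψ (r * N)) := by
    refine ⟨integral_nonneg fun y => H.nonneg (mul_nonneg hr.le (hf0 y)), ?_⟩
    calc ∫ y, Ψ (r * f y) ∂σ ≤ ∫ y, Ψ (r * N) ∂σ :=
          integral_mono iR (integrable_const _) fun y =>
            hmono (mem_Ici.2 (mul_nonneg hr.le (hf0 y))) (mem_Ici.2 (mul_nonneg hr.le hN))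
              (mul_le_mul_of_nonneg_left (hfN y) hr.le)
      _ = Ψ (r * N) := by simp
  obtain ⟨m', hm', hmB⟩ := H.exists_eq (mul_nonneg hr.le hN) hB
  obtain ⟨m, rfl⟩ : ∃ m, m' = r * m := ⟨m' / r, by field_simp⟩
  have hm0 : 0 ≤ m := nonneg_of_mul_nonneg_right hm'.1 hr
  rw [← hmB]
  -- At `m = 0` the density `ρ` may vanish and there is no supporting hyperplane.
  rcases hm0.eq_or_lt with rfl | hm
  · rw [mul_zero, H.zero]; exact H.nonneg (mul_nonneg hr.le hx)
  suffices hs : Ψ m ≤ ∫ y, Ψ (f y) ∂μ by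
    have := (H.strictMono.le_iff_le (mem_Ici.2 hm0) (mem_Ici.2 hx)).1 (hs.trans h)
    exact hmono (mem_Ici.2 (mul_nonneg hr.le hm0)) (mem_Ici.2 (mul_nonneg hr.le hx))
      (mul_le_mul_of_nonneg_left this hr.le)
  have hp0 := H.hp.1
  have hc : 0 ≤ 1 - r ^ p := sub_nonneg.2 (rpow_le_one H.hr.1.le H.hr.2 H.hp.1.le)
  set θ : ℝ → ℝ := fun y => exp ((1 - r ^ p) * (f y ^ p - m ^ p)) with hθ
  have hθm : Measurable θ := by fun_prop
  have hθ0 : ∀ y, 0 ≤ θ y := fun y => (exp_pos _).le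
  have hθb : ∀ y, ‖θ y‖ ≤ exp ((1 - r ^ p) * (N ^ p - m ^ p)) := fun y => by
    rw [Real.norm_of_nonneg (exp_pos _).le]
    refine exp_le_exp.2 (mul_le_mul_of_nonneg_left ?_ hc)
    have := rpow_le_rpow (hf0 y) (hfN y) hp0.le
    linarith
  have iθ : Integrable θ σ := Integrable.of_bound hθm.aestronglyMeasurable _ (.of_forall hθb)
  set τ := σ.withDensity fun y => ENNReal.ofReal (θ y) with hτ
  have : IsFiniteMeasure τ := isFiniteMeasure_withDensity_ofReal iθ.2
  have hτA : ∀ A, MeasurableSet A → τ.real A = ∫ y in A, θ y ∂σ := fun A hA => by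
    rw [measureReal_def, hτ, withDensity_apply _ hA,
      integral_eq_lintegral_of_nonneg_ae (.of_forall hθ0) hθm.aestronglyMeasurable]
  have hτF : ∫ y, Ψ (f y) ∂τ = ∫ y, Ψ (f y) * θ y ∂σ := by
    rw [hτ, integral_withDensity_eq_integral_toReal_smul (by fun_prop)
      (.of_forall fun y => ENNReal.ofReal_lt_top)]
    refine integral_congr_ae (.of_forall fun y => ?_)
    simp [ENNReal.toReal_ofReal (hθ0 y), mul_comm]
  have hFm : Measurable fun y => Ψ (f y) := hΨm.comp hfm
  have := layer_cake_comparison (μ := μ) (τ := τ) (F := fun y => Ψ (f y))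
    (κ := Ψ m - ∫ y, Ψ (f y) * θ y ∂σ) hFm
    (fun y => H.nonneg (hf0 y)) (fun y => (H.lt_one (hf0 y)).le) fun s hs => by
      have hAm : MeasurableSet {y | s < Ψ (f y)} := measurableSet_lt measurable_const hFm
      obtain ⟨a, ha, h1, h2⟩ := exists_strip (A := {y | s < Ψ (f y)}) (N := N)
        (fun y z hyz (hz : s < Ψ (f z)) => hz.trans_le
          (hmono (mem_Ici.2 (hf0 z)) (mem_Ici.2 (hf0 y)) (hf y z hyz)))
        (fun y (hy : s < Ψ (f y)) => by
          by_contra! hh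
          rw [hfs y hh, H.zero] at hy
          exact absurd hs.1 hy.le.not_gt)
      rw [hτA _ hAm]
      exact H.set_bound hfm hf0 hfN hm hmB.symm hAm ha (H.strip a ha _ h1 h2)
        (H.strip' a ha _ h1 h2)
  rw [hτF] at this
  linarith

/-- The functional inequality `∫ G dσ ≤ S (∫ F dμ)` for `G ≤ S ∘ F`, where `S (Ψ x) = Ψ (r x)`.
The relation `v ≤ S u` is written as `∀ x ≥ 0, u ≤ Ψ x → v ≤ Ψ (r x)`, which also makes sense for
`u = 1`, a value not attained by `Ψ`. -/
theorem step (H : IsProfile p r C Ψ μ σ) [IsProbabilityMeasure μ] [IsProbabilityMeasure σ]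
    {F G : ℝ → ℝ} (hF : ∀ y z, |y| ≤ |z| → F z ≤ F y) (hF0 : ∀ y, 0 ≤ F y) (hF1 : ∀ y, F y ≤ 1)
    (hGm : Measurable G) (hG0 : ∀ y, 0 ≤ G y) (hG1 : ∀ y, G y ≤ 1)
    (hFG : ∀ y x, 0 ≤ x → F y ≤ Ψ x → G y ≤ Ψ (r * x)) {x : ℝ} (hx : 0 ≤ x)
    (h : ∫ y, F y ∂μ ≤ Ψ x) : ∫ y, G y ∂σ ≤ Ψ (r * x) := by
  have hr := H.hr.1
  have hmono := H.strictMono.monotoneOn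
  have hΨm := H.cont.measurable
  have key : ∀ N, 0 ≤ N → ∫ y, G y ∂σ ≤ Ψ (r * x) + 2 * (1 - Ψ (r * N)) := by
    intro N hN
    -- Truncating to height `Ψ N` and to `|y| ≤ N` costs at most `1 - Ψ (r N)` each.
    have hu : ∀ y, min (F y) (Ψ N) ∈ Icc 0 (Ψ N) := fun y =>
      ⟨le_min (hF0 y) (H.nonneg hN), min_le_right _ _⟩
    choose g hg hgu using fun y => H.exists_eq hN (hu y)
    set f : ℝ → ℝ := fun y => if |y| ≤ N then g y else 0 with hf
    have hf0 : ∀ y, 0 ≤ f y := fun y => by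
      simp only [hf]; split_ifs
      · exact (hg y).1
      · exact le_rfl
    have hfN : ∀ y, f y ≤ N := fun y => by
      simp only [hf]; split_ifs
      · exact (hg y).2
      · exact hN
    have hfa : ∀ y z, |y| ≤ |z| → f z ≤ f y := fun y z hyz => by
      by_cases hz : |z| ≤ N
      · simp only [hf, if_pos hz, if_pos (hyz.trans hz)]
        rw [← H.strictMono.le_iff_le (mem_Ici.2 (hg z).1) (mem_Ici.2 (hg y).1), hgu, hgu]
        exact min_le_min_right _ (hF y z hyz)
      · rw [show f z = 0 by simp [hf, hz]]; exact hf0 y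
    have hfs : ∀ y, N < |y| → f y = 0 := fun y hy => by simp [hf, not_le.2 hy]
    have hfm := measurable_of_abs_antitone hfa
    have hFm := measurable_of_abs_antitone hF
    have hΨF : ∀ y, Ψ (f y) ≤ F y := fun y => by
      simp only [hf]; split_ifs
      · rw [hgu]; exact min_le_left _ _
      · rw [H.zero]; exact hF0 y
    have hb : ∀ x, 0 ≤ x → ‖Ψ x‖ ≤ 1 := fun x hx => by
      rw [Real.norm_of_nonneg (H.nonneg hx)]; exact (H.lt_one hx).le
    have h1 : ∫ y, Ψ (f y) ∂μ ≤ Ψ x := by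
      refine (integral_mono ?_ ?_ hΨF).trans h
      · exact Integrable.of_bound (hΨm.comp hfm).aestronglyMeasurable 1
          (.of_forall fun y => hb _ (hf0 y))
      · exact Integrable.of_bound hFm.aestronglyMeasurable 1
          (.of_forall fun y => by rw [Real.norm_of_nonneg (hF0 y)]; exact hF1 y)
    have h2 := H.bounded_step hfa hf0 hfN hfs hx h1
    set A : Set ℝ := {y | |y| ≤ N} with hA
    have hAm : MeasurableSet A := measurableSet_le measurable_norm measurable_const
    have hσA : σ.real A = Ψ (r * N) := H.strip' N hN A
      (fun y (hy : |y| < N) => show |y| ≤ N from hy.le) subset_rfl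
    have iR : Integrable (fun y => Ψ (r * f y)) σ :=
      Integrable.of_bound (hΨm.comp (hfm.const_mul r)).aestronglyMeasurable 1
        (.of_forall fun y => hb _ (mul_nonneg hr.le (hf0 y)))
    have iA : Integrable (Aᶜ.indicator fun _ => (1 : ℝ)) σ :=
      (integrable_const 1).indicator hAm.compl
    have iRc : Integrable (fun y => Ψ (r * f y) + (1 - Ψ (r * N))) σ :=
      iR.add (integrable_const _)
    calc ∫ y, G y ∂σ ≤ ∫ y, (Ψ (r * f y) + (1 - Ψ (r * N)) +
          Aᶜ.indicator (fun _ => (1 : ℝ)) y) ∂σ := by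
          refine integral_mono ?_ (iRc.add iA) fun y => ?_
          · exact Integrable.of_bound hGm.aestronglyMeasurable 1
              (.of_forall fun y => by rw [Real.norm_of_nonneg (hG0 y)]; exact hG1 y)
          have hrN := (H.lt_one (mul_nonneg hr.le hN)).le
          have hrf := H.nonneg (mul_nonneg hr.le (hf0 y))
          by_cases hy : y ∈ A
          · have hfy : f y = g y := if_pos hy
            simp only [indicator_of_notMem (notMem_compl_iff.2 hy)]
            rcases le_total (F y) (Ψ N) with hc | hc
            · have := hFG y (f y) (hf0 y) (by rw [hfy, hgu, min_eq_left hc])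
              linarith
            · have : f y = N := H.strictMono.injOn (mem_Ici.2 (hf0 y)) (mem_Ici.2 hN) (by
                rw [hfy, hgu, min_eq_right hc])
              rw [this]
              linarith [hG1 y]
          · simp only [indicator_of_mem (mem_compl hy)]
            linarith [hG1 y]
      _ = ∫ y, Ψ (r * f y) ∂σ + (1 - Ψ (r * N)) + (1 - Ψ (r * N)) := by
          rw [integral_add iRc iA, integral_add iR (integrable_const _),
            integral_indicator hAm.compl]
          simp [measureReal_compl hAm, hσA]
      _ ≤ _ := by linarith
  have hlim : Filter.Tendsto (fun N => Ψ (r * N)) Filter.atTop (nhds 1) :=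
    H.lim.comp (Filter.tendsto_id.const_mul_atTop hr)
  have hlim' : Filter.Tendsto (fun N => Ψ (r * x) + 2 * (1 - Ψ (r * N))) Filter.atTop
      (nhds (Ψ (r * x) + 2 * (1 - 1))) := ((hlim.const_sub 1).const_mul 2).const_add _
  rw [sub_self, mul_zero, add_zero] at hlim'
  refine ge_of_tendsto hlim' ?_
  filter_upwards [Filter.eventually_ge_atTop 0] with N hN
  exact key N hN

end IsProfile

/-! ### Induction on the dimension -/

theorem measurableSet_section {n : ℕ} {L : Set (Fin (n + 1) → ℝ)} (hL : MeasurableSet L) (y : ℝ) :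
    MeasurableSet {v : Fin n → ℝ | (Fin.cons y v : Fin (n + 1) → ℝ) ∈ L} := by
  have : Measurable fun v : Fin n → ℝ => (Fin.cons y v : Fin (n + 1) → ℝ) := by
    refine measurable_pi_iff.2 fun i => ?_
    refine Fin.cases ?_ (fun j => ?_) i
    · simp
    · simpa using measurable_pi_apply j
  exact this hL

/-- Fubini: the product measure of `L` is the integral of the measures of its slices along the
first coordinate. -/
theorem pi_real_succ (μ : Measure ℝ) [IsProbabilityMeasure μ] {n : ℕ}
    {L : Set (Fin (n + 1) → ℝ)} (hL : MeasurableSet L) :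
    Measurable (fun y => (Measure.pi fun _ : Fin n => μ).real
      {v | (Fin.cons y v : Fin (n + 1) → ℝ) ∈ L}) ∧
    (Measure.pi fun _ : Fin (n + 1) => μ).real L =
      ∫ y, (Measure.pi fun _ : Fin n => μ).real
        {v | (Fin.cons y v : Fin (n + 1) → ℝ) ∈ L} ∂μ := by
  have mp := (measurePreserving_piFinSuccAbove (fun _ : Fin (n + 1) => μ) 0).symm
  set e := (MeasurableEquiv.piFinSuccAbove (fun _ : Fin (n + 1) => ℝ) 0).symm with he
  have hS : MeasurableSet (e ⁻¹' L) := e.measurable hL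
  have hsec : ∀ y, Prod.mk y ⁻¹' (e ⁻¹' L) =
      {v | (Fin.cons y v : Fin (n + 1) → ℝ) ∈ L} := fun y => by
    ext v
    have : e (y, v) = (Fin.cons y v : Fin (n + 1) → ℝ) := by
      simp [he, MeasurableEquiv.piFinSuccAbove, Fin.insertNthEquiv]
    change e (y, v) ∈ L ↔ (Fin.cons y v : Fin (n + 1) → ℝ) ∈ L
    rw [this]
  have hm : Measurable fun y => (Measure.pi fun _ : Fin n => μ)
      {v | (Fin.cons y v : Fin (n + 1) → ℝ) ∈ L} := by
    have := measurable_measure_prodMk_left (ν := Measure.pi fun _ : Fin n => μ) hS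
    simpa only [hsec] using this
  refine ⟨hm.ennreal_toReal, ?_⟩
  have h1 := mp.measure_preimage hL.nullMeasurableSet
  rw [measureReal_def, ← h1]
  refine Eq.trans (congrArg ENNReal.toReal (Measure.prod_apply hS)) ?_
  simp only [hsec]
  exact (integral_toReal hm.aemeasurable (.of_forall fun y => measure_lt_top _ _)).symm

/-- The inequality for ideals in every dimension, comparing the product measures of `L` itself. -/
theorem IsProfile.ideal {p r C : ℝ} {Ψ : ℝ → ℝ} {μ σ : Measure ℝ} (H : IsProfile p r C Ψ μ σ)
    [IsProbabilityMeasure μ] [IsProbabilityMeasure σ] (n : ℕ) :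
    ∀ L : Set (Fin n → ℝ), MeasurableSet L → IsIdeal L → ∀ x, 0 ≤ x →
      (Measure.pi fun _ => μ).real L ≤ Ψ x → (Measure.pi fun _ => σ).real L ≤ Ψ (r * x) := by
  induction n with
  | zero =>
    intro L _ _ x hx h
    rcases L.eq_empty_or_nonempty with rfl | hne
    · simpa using H.nonneg (mul_nonneg H.hr.1.le hx)
    · rw [Subsingleton.eq_univ_of_nonempty hne, probReal_univ] at h
      exact absurd (H.lt_one hx) h.not_gt
  | succ n ih =>
    intro L hLm hL x hx h
    rw [(pi_real_succ μ hLm).2] at h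
    rw [(pi_real_succ σ hLm).2]
    refine H.step (fun y z hyz => ?_) (fun y => measureReal_nonneg) (fun y => measureReal_le_one)
      (pi_real_succ σ hLm).1 (fun y => measureReal_nonneg) (fun y => measureReal_le_one)
      (fun y x hx hy => ih _ (measurableSet_section hLm y) ?_ x hx hy) hx h
    · refine measureReal_mono fun v hv => hL _ hv _ fun i => ?_
      refine Fin.cases ?_ (fun j => ?_) i
      · simpa using hyz
      · simp
    · intro v hv v' hv'
      refine hL _ hv _ fun i => ?_
      refine Fin.cases ?_ (fun j => ?_) i
      · simp
      · simpa using hv' j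

/-! ### The measure `ν_p^n` as a product of one-dimensional measures -/

section OneDim

variable {p cp : ℝ} {Ψ : ℝ → ℝ}

/-- The one-dimensional measure with density `(cp/2) exp (-|y| ^ p)`. -/
def nuOne (p cp : ℝ) : Measure ℝ :=
  (volume : Measure ℝ).withDensity fun y => ENNReal.ofReal (cp / 2 * exp (-(|y| ^ p)))

theorem measurable_nuOne_density :
    Measurable fun y : ℝ => cp / 2 * exp (-(|y| ^ p)) := by
  fun_prop

/-- Integrability follows from the integral being nonzero. -/
theorem integral_nuOne_density (hp : 0 < p) (hcp : cp = 1 / Gamma (1 + 1 / p)) :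
    Integrable (fun y : ℝ => cp / 2 * exp (-(|y| ^ p))) ∧
      ∫ y : ℝ, cp / 2 * exp (-(|y| ^ p)) = 1 := by
  have hG : 0 < Gamma (1 + 1 / p) := Gamma_pos_of_pos (by positivity)
  have h : ∫ y : ℝ, cp / 2 * exp (-(|y| ^ p)) = 1 := by
    rw [integral_const_mul, integral_comp_abs (f := fun y => exp (-(y ^ p))),
      integral_exp_neg_rpow hp, add_comm (1 / p), hcp]
    field_simp
  exact ⟨Integrable.of_integral_ne_zero (by rw [h]; exact one_ne_zero), h⟩

theorem nuOne_probability (hp : 0 < p) (hcp : cp = 1 / Gamma (1 + 1 / p)) (hc : 0 < cp) :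
    IsProbabilityMeasure (nuOne p cp) := by
  obtain ⟨hi, h⟩ := integral_nuOne_density hp hcp
  constructor
  rw [nuOne, withDensity_apply _ MeasurableSet.univ, Measure.restrict_univ,
    ← ofReal_integral_eq_lintegral_ofReal hi (.of_forall fun y => by positivity), h]
  simp

theorem nuOne_strip (hp : 0 < p) (hcp : cp = 1 / Gamma (1 + 1 / p)) (hc : 0 < cp)
    (hΨ : ∀ x, Ψ x = cp * ∫ s in (0 : ℝ)..x, exp (-(s ^ p))) {a : ℝ} (ha : 0 ≤ a) {A : Set ℝ}
    (h1 : {y | |y| < a} ⊆ A) (h2 : A ⊆ {y | |y| ≤ a}) : (nuOne p cp).real A = Ψ a := by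
  obtain ⟨hi, -⟩ := integral_nuOne_density hp hcp
  have hS : MeasurableSet {y : ℝ | |y| ≤ a} := measurableSet_le measurable_norm measurable_const
  have hAS : A =ᵐ[nuOne p cp] {y | |y| ≤ a} := by
    have hnull : (nuOne p cp) {a, -a} = 0 :=
      withDensity_absolutelyContinuous _ _ ((Set.toFinite {a, -a}).measure_zero _)
    refine Filter.EventuallyLE.antisymm (LE.le.eventuallyLE h2) ?_
    rw [ae_le_set]
    refine measure_mono_null (fun y hy => ?_) hnull
    have hy1 : |y| ≤ a := hy.1
    have hy2 : ¬ |y| < a := fun h => hy.2 (h1 h)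
    have : |y| = a := le_antisymm hy1 (not_lt.1 hy2)
    rcases abs_choice y with h | h
    · left; linarith
    · right; rw [mem_singleton_iff]; linarith
  rw [measureReal_congr hAS, measureReal_def, nuOne, withDensity_apply _ hS,
    ← ofReal_integral_eq_lintegral_ofReal hi.restrict (.of_forall fun y => by positivity),
    ENNReal.toReal_ofReal (integral_nonneg fun y => by positivity), integral_const_mul, hΨ,
    ← integral_indicator hS]
  have h3 : ∀ y : ℝ, {y : ℝ | |y| ≤ a}.indicator (fun y => exp (-(|y| ^ p))) y =
      (Iic a).indicator (fun y => exp (-(y ^ p))) |y| := fun y => by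
    by_cases h : |y| ≤ a
    · rw [indicator_of_mem (show y ∈ {y : ℝ | |y| ≤ a} from h), indicator_of_mem (mem_Iic.2 h)]
    · rw [indicator_of_notMem (show y ∉ {y : ℝ | |y| ≤ a} from h),
        indicator_of_notMem (fun h' => h (mem_Iic.1 h'))]
  simp only [h3]
  rw [integral_comp_abs (f := (Iic a).indicator fun y => exp (-(y ^ p))),
    setIntegral_indicator measurableSet_Iic, Ioi_inter_Iic, intervalIntegral.integral_of_le ha]
  ring

theorem isProfile_nuOne (hp : p ∈ Ioc (0 : ℝ) 1) (hcp : cp = 1 / Gamma (1 + 1 / p))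
    (hΨ : ∀ x, Ψ x = cp * ∫ s in (0 : ℝ)..x, exp (-(s ^ p))) {t : ℝ} (ht : 1 ≤ t) :
    IsProfile p t⁻¹ cp Ψ (nuOne p cp) ((nuOne p cp).map (t * ·)) := by
  have hp0 := hp.1
  have ht0 : 0 < t := by linarith
  have hc : 0 < cp := by
    rw [hcp]; exact one_div_pos.2 (Gamma_pos_of_pos (by positivity))
  have hΨe : Ψ = fun x => cp * ∫ s in (0 : ℝ)..x, exp (-(s ^ p)) := funext hΨ
  have hcont : Continuous fun s : ℝ => exp (-(s ^ p)) := by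
    have : Continuous fun s : ℝ => s ^ p := continuous_rpow_const hp0.le
    fun_prop
  have hd : ∀ x, HasDerivAt Ψ (cp * exp (-(x ^ p))) x := fun x => by
    rw [hΨe]
    exact (hcont.integral_hasStrictDerivAt 0 x).hasDerivAt.const_mul cp
  have hcΨ : Continuous Ψ := continuous_iff_continuousAt.2 fun x => (hd x).continuousAt
  have hmono : StrictMono Ψ := strictMono_of_deriv_pos fun x => by
    rw [(hd x).deriv]; positivity
  refine ⟨hp, ⟨by positivity, inv_le_one_of_one_le₀ ht⟩, hc, hcΨ, fun x _ => hd x, by simp [hΨ],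
    hmono.strictMonoOn _, ?_, fun a ha A => nuOne_strip hp0 hcp hc hΨ ha, fun a ha A h1 h2 => ?_⟩
  · have hint : IntegrableOn (fun s : ℝ => exp (-(s ^ p))) (Ioi 0) := by
      refine Integrable.of_integral_ne_zero ?_
      rw [integral_exp_neg_rpow hp0]
      exact (Gamma_pos_of_pos (by positivity)).ne'
    have := (intervalIntegral_tendsto_integral_Ioi 0 hint Filter.tendsto_id).const_mul cp
    rw [integral_exp_neg_rpow hp0, add_comm (1 / p), hcp,
      one_div_mul_cancel (Gamma_pos_of_pos (by positivity)).ne', ← hcp] at this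
    rw [hΨe]
    exact this
  · rw [measureReal_def, (measurableEmbedding_mulLeft₀ ht0.ne').map_apply, ← measureReal_def]
    refine nuOne_strip hp0 hcp hc hΨ (by positivity) (fun y hy => h1 ?_) (fun y hy => ?_)
    · have hy : |y| < t⁻¹ * a := hy
      change |t * y| < a
      rw [abs_mul, abs_of_pos ht0]
      rwa [lt_inv_mul_iff₀ ht0] at hy
    · have hy : |t * y| ≤ a := h2 hy
      change |y| ≤ t⁻¹ * a
      rw [abs_mul, abs_of_pos ht0] at hy
      rwa [le_inv_mul_iff₀ ht0]

theorem nu_eq_pi (hp : 0 < p) (hcp : cp = 1 / Gamma (1 + 1 / p)) (hc : 0 < cp) (n : ℕ) :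
    ((volume : Measure (Fin n → ℝ)).withDensity fun x =>
      ENNReal.ofReal ((cp / 2) ^ n * exp (-(∑ i, |x i| ^ p)))) =
    Measure.pi fun _ => nuOne p cp := by
  have := nuOne_probability hp hcp hc
  obtain ⟨hi, -⟩ := integral_nuOne_density hp hcp
  have hprod : ∀ x : Fin n → ℝ, (cp / 2) ^ n * exp (-(∑ i, |x i| ^ p)) =
      ∏ i, (cp / 2 * exp (-(|x i| ^ p))) := fun x => by
    rw [Finset.prod_mul_distrib, ← exp_sum, Finset.sum_neg_distrib]
    simp [div_pow]
  refine (Measure.pi_eq fun s hs => ?_).symm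
  simp only [hprod]
  have hs' : MeasurableSet (Set.univ.pi s) := MeasurableSet.univ_pi hs
  have hI : Integrable (fun x : Fin n → ℝ => ∏ i, (cp / 2 * exp (-(|x i| ^ p)))) :=
    Integrable.fintype_prod (f := fun _ y => cp / 2 * exp (-(|y| ^ p))) fun _ => hi
  rw [withDensity_apply _ hs', ← ofReal_integral_eq_lintegral_ofReal hI.restrict
    (.of_forall fun x => Finset.prod_nonneg fun i _ => by positivity), volume_pi,
    Measure.restrict_pi_pi,
    integral_fintype_prod_eq_prod (f := fun _ y => cp / 2 * exp (-(|y| ^ p))),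
    ENNReal.ofReal_prod_of_nonneg fun i _ => integral_nonneg fun y => by positivity]
  refine Finset.prod_congr rfl fun i _ => ?_
  rw [nuOne, withDensity_apply _ (hs i), ← ofReal_integral_eq_lintegral_ofReal hi.restrict
    (.of_forall fun y => by positivity)]

end OneDim

/-- **Concentration form of the S-inequality for `ν_p^n`.** Let `p ∈ (0,1]`,
`c_p = 1/Γ(1+1/p)`, and `Ψ_p(x) = c_p·∫_0^x exp(-s^p) ds`, so that `Ψ_p w` is the
`ν_p^n`-measure of the strip of half-width `w`. Then for every ideal `K ⊆ ℝⁿ` with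
`0 < ν_p^n(K) < 1` and every `t ≥ 1`, one has `ν_p^n(tK) ≥ Ψ_p(t·Ψ_p⁻¹(ν_p^n(K)))`. -/
theorem concentration_nu_p (p : ℝ) (hp : p ∈ Set.Ioc (0 : ℝ) 1) (n : ℕ) [NeZero n]
    (cp : ℝ) (hcp : cp = 1 / Real.Gamma (1 + 1 / p))
    (ν : Measure (Fin n → ℝ))
    (hν : ν = (volume : Measure (Fin n → ℝ)).withDensity fun x =>
      ENNReal.ofReal ((cp / 2) ^ n * Real.exp (-(∑ i, |x i| ^ p))))
    (Ψ : ℝ → ℝ) (hΨ : ∀ x, Ψ x = cp * ∫ s in (0 : ℝ)..x, Real.exp (-(s ^ p)))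
    (K : Set (Fin n → ℝ)) (hKmeas : MeasurableSet K) (hK : IsIdeal K)
    (hK0 : 0 < ν K) (hK1 : ν K < 1)
    (w : ℝ) (hw : 0 ≤ w) (hwK : Ψ w = (ν K).toReal)
    (t : ℝ) (ht : 1 ≤ t) :
    ENNReal.ofReal (Ψ (t * w)) ≤ ν (t • K) := by
  have H := isProfile_nuOne hp hcp hΨ ht
  have ht0 : 0 < t := by linarith
  have := nuOne_probability hp.1 hcp H.hC
  have : IsProbabilityMeasure ((nuOne p cp).map (t * ·)) :=
    Measure.isProbabilityMeasure_map (by fun_prop)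
  rw [nu_eq_pi hp.1 hcp H.hC] at hν
  subst hν
  rw [← measureReal_def] at hwK
  have hL : MeasurableSet (t • K) := hKmeas.const_smul₀ t
  have hLi : IsIdeal (t • K) := by
    rintro _ ⟨x, hx, rfl⟩ y hy
    rw [mem_smul_set_iff_inv_smul_mem₀ ht0.ne']
    refine hK x hx _ fun i => ?_
    have := hy i
    simp only [Pi.smul_apply, smul_eq_mul, abs_mul, abs_inv, abs_of_pos ht0] at this ⊢
    rwa [inv_mul_le_iff₀ ht0]
  have hmap : (Measure.pi fun _ : Fin n => (nuOne p cp).map (t * ·)).real (t • K) =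
      (Measure.pi fun _ : Fin n => nuOne p cp).real K := by
    rw [← Measure.pi_map_pi fun _ => by fun_prop, measureReal_def,
      Measure.map_apply (by fun_prop) hL, ← measureReal_def]
    congr 1
    ext x
    change t • x ∈ t • K ↔ x ∈ K
    exact smul_mem_smul_set_iff₀ ht0.ne' K x
  refine ENNReal.ofReal_le_of_le_toReal ?_
  rw [← measureReal_def]
  -- Otherwise `ν (tK) = Ψ x` with `x < tw`, whence `Ψ w = ν K ≤ Ψ (x / t) < Ψ w`.
  by_contra! hlt
  have htw : 0 ≤ t * w := by positivity
  obtain ⟨x, hx, hxe⟩ := H.exists_eq htw ⟨measureReal_nonneg, hlt.le⟩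
  have h1 := H.ideal n _ hL hLi x hx.1 hxe.ge
  rw [hmap, ← hwK] at h1
  have h2 : x < t * w := by
    rw [← hxe] at hlt
    exact (H.strictMono.lt_iff_lt hx.1 htw).1 hlt
  have h3 : t⁻¹ * x < w := (inv_mul_lt_iff₀ ht0).2 h2
  have h4 := H.strictMono (mem_Ici.2 (mul_nonneg H.hr.1.le hx.1)) (mem_Ici.2 hw) h3
  linarith
end
end
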